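/- Suppose σ_n → ∞. Then for every q > 0 we have ‖F_n − Φ‖_{L^q(dt)} = O(σ_n^{−1}), i.e. there is a constant C_q such that (∫_ℝ |F_n(t) − Φ(t)|^q dt)^{1/q} ≤ C_q σ_n^{−1} for all n. -/

import Mathlib

open MeasureTheory ProbabilityTheory Filter
open scoped ENNReal NNReal

noncomputable section

variable {Ω : Type*} [MeasurableSpace Ω] {𝒳 : ℕ → Type*} [∀ j, MeasurableSpace (𝒳 j)]

/-- The σ-algebra generated by `X_0, …, X_j`. -/
def pastSigma (X : ∀ j, Ω → 𝒳 j) (j : ℕ) : MeasurableSpace Ω :=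
  ⨆ i ∈ Finset.range (j + 1), MeasurableSpace.comap (X i) inferInstance

/-- `X` is an inhomogeneous Markov chain (on the probability space `(Ω, μ)`) whose `n`-step
transition probabilities from time `j` are given by the Markov kernels `κ j n`: for every
measurable `Γ`, `ℙ(X_{j+n} ∈ Γ | X_0, …, X_j) = (κ j n) (X j) Γ` a.s. -/
structure IsInhomMarkov (μ : Measure Ω) (X : ∀ j, Ω → 𝒳 j)
    (κ : ∀ j n, Kernel (𝒳 j) (𝒳 (j + n))) : Prop where
  meas : ∀ j, Measurable (X j)
  isMarkovKernel : ∀ j n, IsMarkovKernel (κ j n)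
  cond : ∀ j n (Γ : Set (𝒳 (j + n))), MeasurableSet Γ →
    (μ[(fun ω => Γ.indicator (fun _ => (1 : ℝ)) (X (j + n) ω)) | pastSigma X j])
      =ᵐ[μ] fun ω => (κ j n (X j ω) Γ).toReal

/-- The standard normal distribution function `Φ`. -/
def stdNormalCDF (t : ℝ) : ℝ := (gaussianReal 0 1 (Set.Iic t)).toReal

/-!
Take the `Y_j` centred. Adding to them the coboundary of the conditional means of their tails turns
`S_n` into a sum of bounded martingale differences. For `z` in a fixed disc the conditional
exponentials of the tails of `z S_n`, normalised by their means, then satisfy a backward recursion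
in which each step multiplies by a scalar close to `1`, the analogue of the leading eigenvalue of a
perturbed transfer operator. The Pythagoras identity for conditional expectations bounds the sum of
the distances of these scalars from `1` by `O(|z|² σ_n²)`. So `log E e^{z S_n}` is analytic and
`O(|z|² σ_n²)` on a disc independent of `n`, and the Schwarz lemma upgrades this to
`z² σ_n² / 2 + O(|z|³ σ_n²)`.

The moment generating function of `S_n / σ_n` is therefore close to the Gaussian one on a disc of
radius of order `σ_n`. On the line `Re z = 1` it is, up to the factor `z`, the Fourier transform of
the tilted tail `e^t ℙ(S_n / σ_n ≥ t)`. Esseen smoothing of the tilted tails gives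
`|F_n(t) - Φ(t)| ≤ K e^{-|t|} / σ_n` when `σ_n` is large, while the Chernoff bound covers bounded
`σ_n`; such exponential bounds have `L^q` norm `O(1 / σ_n)` for every `q > 0`.
-/

section CondExp

variable {O : Type*} {𝒢 m0 : MeasurableSpace O} {μ : Measure O} {U V : O → ℂ}

lemma exists_ae_norm_le_of_memLp_top {E : Type*} [NormedAddCommGroup E] {V : O → E}
    (hV : MemLp V ∞ μ) : ∃ B : ℝ, ∀ᵐ ω ∂μ, ‖V ω‖ ≤ B :=
  ⟨(eLpNormEssSup V μ).toReal, by
    filter_upwards [ae_le_eLpNormEssSup (f := V) (μ := μ)] with ω hω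
    have hfin : eLpNormEssSup V μ ≠ ∞ := by
      simpa [eLpNorm_exponent_top] using hV.eLpNorm_ne_top
    simpa using ENNReal.toReal_mono hfin hω⟩

lemma memLp_top_cexp (hV : MemLp V ∞ μ) : MemLp (fun ω => Complex.exp (V ω)) ∞ μ := by
  obtain ⟨B, hB⟩ := exists_ae_norm_le_of_memLp_top hV
  refine memLp_top_of_bound (Complex.continuous_exp.comp_aestronglyMeasurable hV.1)
    (Real.exp B) ?_
  filter_upwards [hB] with ω hω
  rw [Complex.norm_exp]
  exact Real.exp_le_exp.2 ((Complex.re_le_norm _).trans hω)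

lemma integrable_norm_sq_of_memLp_top [IsFiniteMeasure μ] (hV : MemLp V ∞ μ) :
    Integrable (fun ω => ‖V ω‖ ^ 2) μ :=
  (hV.mono_exponent le_top).integrable_norm_pow two_ne_zero

lemma condExp_complex_mul_left (hU : AEStronglyMeasurable[𝒢] U μ)
    (hUV : Integrable (fun ω => U ω * V ω) μ) (hV : Integrable V μ) :
    μ[fun ω => U ω * V ω | 𝒢] =ᵐ[μ] fun ω => U ω * μ[V | 𝒢] ω :=
  condExp_bilin_of_aestronglyMeasurable_left (ContinuousLinearMap.mul ℝ ℂ) hU hUV hV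

lemma ae_norm_condExp_sub_const_le [IsFiniteMeasure μ] (h𝒢 : 𝒢 ≤ m0) (hV : Integrable V μ)
    {c : ℂ} {r : ℝ} (h : ∀ᵐ ω ∂μ, ‖V ω - c‖ ≤ r) : ∀ᵐ ω ∂μ, ‖μ[V | 𝒢] ω - c‖ ≤ r := by
  filter_upwards [condExp_sub (m := 𝒢) hV (integrable_const c),
    ae_bdd_norm_condExp_of_ae_bdd_norm (m := 𝒢) (f := V - fun _ => c) h] with ω hsub hle
  simpa [hsub, condExp_const h𝒢] using hle

lemma condExp_sub_condExp_self [IsFiniteMeasure μ] (h𝒢 : 𝒢 ≤ m0) (hV : Integrable V μ) :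
    μ[fun ω => V ω - μ[V | 𝒢] ω | 𝒢] =ᵐ[μ] 0 := by
  have hself : μ[μ[V | 𝒢] | 𝒢] = μ[V | 𝒢] :=
    condExp_of_stronglyMeasurable h𝒢 stronglyMeasurable_condExp integrable_condExp
  filter_upwards [condExp_sub (m := 𝒢) hV (integrable_condExp (m := 𝒢) (f := V))] with ω hω
  refine hω.trans ?_
  simp [hself]

lemma integral_mul_eq_zero_of_condExp_eq_zero [IsFiniteMeasure μ] (h𝒢 : 𝒢 ≤ m0)
    (hU : AEStronglyMeasurable[𝒢] U μ) (hUV : Integrable (fun ω => U ω * V ω) μ)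
    (hV : Integrable V μ) (h0 : μ[V | 𝒢] =ᵐ[μ] 0) :
    ∫ ω, U ω * V ω ∂μ = 0 := by
  rw [← integral_condExp h𝒢, integral_congr_ae (condExp_complex_mul_left hU hUV hV)]
  refine integral_eq_zero_of_ae ?_
  filter_upwards [h0] with ω hω
  simp [hω]

lemma integral_norm_add_sq_of_condExp_eq_zero [IsFiniteMeasure μ] (h𝒢 : 𝒢 ≤ m0)
    (hU : MemLp U 2 μ) (hV : MemLp V 2 μ) (hU𝒢 : AEStronglyMeasurable[𝒢] U μ)
    (h0 : μ[V | 𝒢] =ᵐ[μ] 0) :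
    ∫ ω, ‖U ω + V ω‖ ^ 2 ∂μ = ∫ ω, ‖U ω‖ ^ 2 ∂μ + ∫ ω, ‖V ω‖ ^ 2 ∂μ := by
  have hcross : Integrable (fun ω => star (U ω) * V ω) μ := hU.star.integrable_mul hV
  have horth : ∫ ω, (star (U ω) * V ω).re ∂μ = 0 := by
    have hre : ∫ ω, (star (U ω) * V ω).re ∂μ = (∫ ω, star (U ω) * V ω ∂μ).re :=
      integral_re hcross
    rw [hre, integral_mul_eq_zero_of_condExp_eq_zero (U := fun ω => star (U ω)) h𝒢
      (continuous_star.comp_aestronglyMeasurable hU𝒢) hcross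
      (hV.integrable one_le_two) h0, Complex.zero_re]
  have hexpand : ∀ ω, ‖U ω + V ω‖ ^ 2
      = ‖U ω‖ ^ 2 + ‖V ω‖ ^ 2 + 2 * (star (U ω) * V ω).re := fun ω => by
    simp only [Complex.sq_norm, Complex.normSq_apply, Complex.star_def, Complex.mul_re,
      Complex.add_re, Complex.add_im, Complex.conj_re, Complex.conj_im]
    ring
  have hU2 : Integrable (fun ω => ‖U ω‖ ^ 2) μ := hU.integrable_norm_pow two_ne_zero
  have hV2 : Integrable (fun ω => ‖V ω‖ ^ 2) μ := hV.integrable_norm_pow two_ne_zero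
  have hre : Integrable (fun ω => 2 * (star (U ω) * V ω).re) μ := hcross.re.const_mul 2
  simp_rw [hexpand]
  have hUV2 : Integrable (fun ω => ‖U ω‖ ^ 2 + ‖V ω‖ ^ 2) μ := hU2.add hV2
  rw [integral_add hUV2 hre, integral_add hU2 hV2, integral_const_mul, horth,
    mul_zero, add_zero]

end CondExp

section TwistedStep

variable {O : Type*} {𝒢 m0 : MeasurableSpace O} {μ : Measure O} {D h h' : O → ℂ} {lam : ℂ}

/-- The mean conditional variance `E|h - E[h | 𝒢]|²`. -/
def meanCondVar (μ : Measure O) (𝒢 : MeasurableSpace O) (h : O → ℂ) : ℝ :=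
  ∫ ω, ‖h ω - μ[h | 𝒢] ω‖ ^ 2 ∂μ

/-- One step `lam • h' = E[e^D h | 𝒢]` of a normalised backward recursion, in which `D` is a small
martingale difference and `h`, `h'` are close to `1` and have mean `1`. The factor `lam` plays
the role of a leading eigenvalue and `h`, `h'` that of eigenfunctions of a perturbed transition
operator. -/
structure IsTwistedStep (μ : Measure O) (𝒢 : MeasurableSpace O) (D h h' : O → ℂ) (lam : ℂ) :
    Prop where
  le : 𝒢 ≤ m0
  memLp_diff : MemLp D ∞ μ
  norm_diff_le : ∀ᵐ ω ∂μ, ‖D ω‖ ≤ 1 / 4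
  condExp_diff : μ[D | 𝒢] =ᵐ[μ] 0
  memLp : MemLp h ∞ μ
  memLp' : MemLp h' ∞ μ
  norm_sub_one_le : ∀ᵐ ω ∂μ, ‖h ω - 1‖ ≤ 1 / 12
  norm_sub_one_le' : ∀ᵐ ω ∂μ, ‖h' ω - 1‖ ≤ 1 / 12
  integral_eq_one : ∫ ω, h ω ∂μ = 1
  integral_eq_one' : ∫ ω, h' ω ∂μ = 1
  eigen : (fun ω => lam * h' ω) =ᵐ[μ] μ[fun ω => Complex.exp (D ω) * h ω | 𝒢]

/-- What is left of `e^D h` after removing `h + D · E[h | 𝒢]`; it is of second order because `D`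
has conditional mean zero. -/
def twistRemainder (μ : Measure O) (𝒢 : MeasurableSpace O) (D h : O → ℂ) (ω : O) : ℂ :=
  (Complex.exp (D ω) - 1 - D ω) * h ω + D ω * (h ω - μ[h | 𝒢] ω)

lemma norm_le_two_of_norm_sub_one_le {w : ℂ} (hw : ‖w - 1‖ ≤ 1 / 12) : ‖w‖ ≤ 2 := by
  have htri := norm_le_norm_sub_add w 1
  rw [norm_one] at htri
  linarith

namespace IsTwistedStep

variable (S : IsTwistedStep μ 𝒢 D h h' lam)

include S

lemma memLp_sub_condExp : MemLp (fun ω => h ω - μ[h | 𝒢] ω) ∞ μ :=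
  S.memLp.sub (S.memLp.condExp le_top)

lemma memLp_twistRemainder : MemLp (twistRemainder μ 𝒢 D h) ∞ μ :=
  (S.memLp.mul (((memLp_top_cexp S.memLp_diff).sub (memLp_top_const 1)).sub S.memLp_diff)).add
    (S.memLp_sub_condExp.mul S.memLp_diff)

variable [IsProbabilityMeasure μ]

lemma integral_norm_twistRemainder_le :
    ∫ ω, ‖twistRemainder μ 𝒢 D h ω‖ ∂μ ≤ 3 * ∫ ω, ‖D ω‖ ^ 2 ∂μ + meanCondVar μ 𝒢 h / 2 := by
  have hD := (integrable_norm_sq_of_memLp_top S.memLp_diff).const_mul 3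
  have he := (integrable_norm_sq_of_memLp_top S.memLp_sub_condExp).div_const 2
  calc ∫ ω, ‖twistRemainder μ 𝒢 D h ω‖ ∂μ
      ≤ ∫ ω, (3 * ‖D ω‖ ^ 2 + ‖h ω - μ[h | 𝒢] ω‖ ^ 2 / 2) ∂μ := by
        refine integral_mono_ae (S.memLp_twistRemainder.integrable le_top).norm (hD.add he) ?_
        filter_upwards [S.norm_diff_le, S.norm_sub_one_le] with ω hDω hhω
        have hexp : ‖Complex.exp (D ω) - 1 - D ω‖ ≤ ‖D ω‖ ^ 2 :=
          Complex.norm_exp_sub_one_sub_id_le (hDω.trans (by norm_num))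
        calc ‖twistRemainder μ 𝒢 D h ω‖
            ≤ ‖D ω‖ ^ 2 * 2 + ‖D ω‖ * ‖h ω - μ[h | 𝒢] ω‖ := by
              refine (norm_add_le _ _).trans ?_
              rw [norm_mul, norm_mul (D ω)]
              gcongr
              exact norm_le_two_of_norm_sub_one_le hhω
          _ ≤ 3 * ‖D ω‖ ^ 2 + ‖h ω - μ[h | 𝒢] ω‖ ^ 2 / 2 := by
              nlinarith [sq_nonneg (‖D ω‖ - ‖h ω - μ[h | 𝒢] ω‖), sq_nonneg ‖D ω‖]
    _ = _ := by rw [integral_add hD he, integral_const_mul, integral_div, meanCondVar]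

lemma condExp_exp_mul :
    μ[fun ω => Complex.exp (D ω) * h ω | 𝒢] =ᵐ[μ]
      fun ω => μ[h | 𝒢] ω + μ[twistRemainder μ 𝒢 D h | 𝒢] ω := by
  have hsplit : (fun ω => Complex.exp (D ω) * h ω)
      = (h + twistRemainder μ 𝒢 D h) + fun ω => μ[h | 𝒢] ω * D ω := by
    funext ω
    simp only [twistRemainder, Pi.add_apply]
    ring
  have hh := S.memLp.integrable le_top
  have hR := S.memLp_twistRemainder.integrable le_top
  have hpD : Integrable (fun ω => μ[h | 𝒢] ω * D ω) μ :=
    (S.memLp_diff.mul (r := ∞) (S.memLp.condExp le_top (m := 𝒢))).integrable le_top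
  have hpull := condExp_complex_mul_left (𝒢 := 𝒢) stronglyMeasurable_condExp.aestronglyMeasurable
    hpD (S.memLp_diff.integrable le_top)
  rw [hsplit]
  filter_upwards [condExp_add (m := 𝒢) (hh.add hR) hpD, condExp_add (m := 𝒢) hh hR, hpull,
    S.condExp_diff] with ω h₁ h₂ h₃ h₄
  rw [h₁, Pi.add_apply, h₂, h₃, h₄]
  simp

lemma sub_one_eq_integral_twistRemainder : lam - 1 = ∫ ω, twistRemainder μ 𝒢 D h ω ∂μ := by
  have hmean : ∫ ω, lam * h' ω ∂μ = 1 + ∫ ω, twistRemainder μ 𝒢 D h ω ∂μ := by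
    rw [integral_congr_ae (S.eigen.trans S.condExp_exp_mul),
      integral_add integrable_condExp integrable_condExp, integral_condExp S.le,
      integral_condExp S.le, S.integral_eq_one]
  rw [integral_const_mul, S.integral_eq_one', mul_one] at hmean
  rw [hmean, add_sub_cancel_left]

lemma norm_sub_one_le_integral :
    ‖lam - 1‖ ≤ 3 * ∫ ω, ‖D ω‖ ^ 2 ∂μ + meanCondVar μ 𝒢 h / 2 := by
  rw [S.sub_one_eq_integral_twistRemainder]
  exact (norm_integral_le_integral_norm _).trans S.integral_norm_twistRemainder_le

lemma integral_norm_sub_condExp_le :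
    ∫ ω, ‖h' ω - μ[h | 𝒢] ω‖ ∂μ ≤ 3 * (3 * ∫ ω, ‖D ω‖ ^ 2 ∂μ + meanCondVar μ 𝒢 h / 2) := by
  have hint : ∫ ω, ‖h' ω - μ[h | 𝒢] ω‖ ∂μ
      ≤ ∫ ω, (‖μ[twistRemainder μ 𝒢 D h | 𝒢] ω‖ + ‖lam - 1‖ * 2) ∂μ := by
    refine integral_mono_ae
      ((S.memLp'.sub (S.memLp.condExp le_top)).integrable le_top).norm
      (integrable_condExp.norm.add (integrable_const _)) ?_
    filter_upwards [S.eigen, S.condExp_exp_mul, S.norm_sub_one_le'] with ω heig hexp hh'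
    have hdecomp : h' ω - μ[h | 𝒢] ω = μ[twistRemainder μ 𝒢 D h | 𝒢] ω - (lam - 1) * h' ω := by
      linear_combination heig.trans hexp
    rw [hdecomp]
    refine (norm_sub_le _ _).trans ?_
    rw [norm_mul]
    gcongr
    exact norm_le_two_of_norm_sub_one_le hh'
  rw [integral_add integrable_condExp.norm (integrable_const _), integral_const,
    probReal_univ, one_smul] at hint
  linarith [integral_norm_condExp_le (μ := μ) (m := 𝒢) (twistRemainder μ 𝒢 D h),
    S.integral_norm_twistRemainder_le, S.norm_sub_one_le_integral]

lemma integral_norm_sub_one_sq_eq :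
    ∫ ω, ‖h ω - 1‖ ^ 2 ∂μ = ∫ ω, ‖μ[h | 𝒢] ω - 1‖ ^ 2 ∂μ + meanCondVar μ 𝒢 h := by
  have hpyth := integral_norm_add_sq_of_condExp_eq_zero S.le
    (((S.memLp.condExp le_top (m := 𝒢)).sub (memLp_top_const 1)).mono_exponent le_top)
    (S.memLp_sub_condExp.mono_exponent le_top)
    (stronglyMeasurable_condExp.aestronglyMeasurable.sub aestronglyMeasurable_const)
    (condExp_sub_condExp_self S.le (S.memLp.integrable le_top))
  simpa [meanCondVar] using hpyth

lemma meanCondVar_le_integral : meanCondVar μ 𝒢 h ≤ ∫ ω, ‖h ω - 1‖ ^ 2 ∂μ := by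
  rw [S.integral_norm_sub_one_sq_eq]
  exact le_add_of_nonneg_left (integral_nonneg fun _ => sq_nonneg _)

lemma integral_norm_sub_one_sq_sub_le :
    ∫ ω, ‖h' ω - 1‖ ^ 2 ∂μ - ∫ ω, ‖μ[h | 𝒢] ω - 1‖ ^ 2 ∂μ
      ≤ 1 / 6 * ∫ ω, ‖h' ω - μ[h | 𝒢] ω‖ ∂μ := by
  have hp := S.memLp.condExp le_top (m := 𝒢)
  have hh'1 := integrable_norm_sq_of_memLp_top (S.memLp'.sub (memLp_top_const 1))
  have hp1 := integrable_norm_sq_of_memLp_top (hp.sub (memLp_top_const 1))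
  simp only [Pi.sub_apply] at hh'1 hp1
  rw [← integral_sub hh'1 hp1, ← integral_const_mul]
  refine integral_mono_ae (hh'1.sub hp1)
    (((S.memLp'.sub hp).integrable le_top).norm.const_mul _) ?_
  filter_upwards [S.norm_sub_one_le', ae_norm_condExp_sub_const_le S.le
    (S.memLp.integrable le_top) S.norm_sub_one_le] with ω hh' hpω
  have htri : ‖h' ω - 1‖ - ‖μ[h | 𝒢] ω - 1‖ ≤ ‖h' ω - μ[h | 𝒢] ω‖ := by
    simpa using norm_sub_norm_le (h' ω - 1) (μ[h | 𝒢] ω - 1)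
  nlinarith [norm_nonneg (h' ω - 1), norm_nonneg (μ[h | 𝒢] ω - 1),
    norm_nonneg (h' ω - μ[h | 𝒢] ω)]

/-- The gain `meanCondVar` in the Pythagoras identity absorbs the error it causes, so that the
squared distances to `1` telescope along a chain of steps. -/
lemma meanCondVar_le :
    meanCondVar μ 𝒢 h ≤
      4 / 3 * (∫ ω, ‖h ω - 1‖ ^ 2 ∂μ - ∫ ω, ‖h' ω - 1‖ ^ 2 ∂μ) + 2 * ∫ ω, ‖D ω‖ ^ 2 ∂μ := by
  linarith [S.integral_norm_sub_one_sq_eq, S.integral_norm_sub_one_sq_sub_le,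
    S.integral_norm_sub_condExp_le]

lemma norm_sub_one_le_half : ‖lam - 1‖ ≤ 1 / 2 := by
  have hD : ∫ ω, ‖D ω‖ ^ 2 ∂μ ≤ 1 / 16 := by
    simpa using integral_mono_ae (integrable_norm_sq_of_memLp_top S.memLp_diff)
      (integrable_const (1 / 16 : ℝ))
      (S.norm_diff_le.mono fun ω hω => by dsimp only; nlinarith [norm_nonneg (D ω)])
  have hh : ∫ ω, ‖h ω - 1‖ ^ 2 ∂μ ≤ 1 / 144 := by
    simpa using integral_mono_ae
      (integrable_norm_sq_of_memLp_top (S.memLp.sub (memLp_top_const 1)))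
      (integrable_const (1 / 144 : ℝ))
      (S.norm_sub_one_le.mono fun ω hω => by
        simp only [Pi.sub_apply]; nlinarith [norm_nonneg (h ω - 1)])
  linarith [S.norm_sub_one_le_integral, S.meanCondVar_le_integral]

end IsTwistedStep

lemma sum_norm_sub_one_le_of_isTwistedStep [IsProbabilityMeasure μ] {ℱ : ℕ → MeasurableSpace O}
    {n : ℕ} {D h : ℕ → O → ℂ} {lam : ℕ → ℂ}
    (hstep : ∀ j < n, IsTwistedStep μ (ℱ j) (D j) (h (j + 1)) (h j) (lam j))
    (hn : h n =ᵐ[μ] 1) :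
    ∑ j ∈ Finset.range n, ‖lam j - 1‖ ≤ 6 * ∑ j ∈ Finset.range n, ∫ ω, ‖D j ω‖ ^ 2 ∂μ := by
  set a : ℕ → ℝ := fun j => ∫ ω, ‖h j ω - 1‖ ^ 2 ∂μ
  set s : ℕ → ℝ := fun j => ∫ ω, ‖D j ω‖ ^ 2 ∂μ
  have hterm : ∀ j ∈ Finset.range n, ‖lam j - 1‖ ≤ 2 / 3 * (a (j + 1) - a j) + 4 * s j :=
    fun j hj => by
      have S := hstep j (Finset.mem_range.1 hj)
      linarith [S.norm_sub_one_le_integral, S.meanCondVar_le]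
  have hend : a n = 0 :=
    integral_eq_zero_of_ae (by filter_upwards [hn] with ω hω; simp [hω])
  have hstart : 0 ≤ a 0 := integral_nonneg fun _ => sq_nonneg _
  have hs0 : 0 ≤ ∑ j ∈ Finset.range n, s j :=
    Finset.sum_nonneg fun j _ => integral_nonneg fun _ => sq_nonneg _
  calc ∑ j ∈ Finset.range n, ‖lam j - 1‖
      ≤ ∑ j ∈ Finset.range n, (2 / 3 * (a (j + 1) - a j) + 4 * s j) := Finset.sum_le_sum hterm
    _ = 2 / 3 * (a n - a 0) + 4 * ∑ j ∈ Finset.range n, s j := by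
        rw [Finset.sum_add_distrib, ← Finset.mul_sum, ← Finset.mul_sum, Finset.sum_range_sub]
    _ ≤ 6 * ∑ j ∈ Finset.range n, s j := by linarith

end TwistedStep

section BoundedAdapted

variable {O : Type*} {m0 : MeasurableSpace O} {μ : Measure O} {ℱ : Filtration ℕ m0}
  {y : ℕ → O → ℂ} {n : ℕ}

/-- The block sum `y_j + ⋯ + y_{k-1}`. -/
def blockSum (y : ℕ → O → ℂ) (j k : ℕ) (ω : O) : ℂ := ∑ i ∈ Finset.Ico j k, y i ω

/-- The conditional expectation given `ℱ j` of the tail `y_j + ⋯ + y_{n-1}`. -/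
def tailSum (μ : Measure O) (ℱ : Filtration ℕ m0) (n : ℕ) (y : ℕ → O → ℂ) (j : ℕ) : O → ℂ :=
  μ[blockSum y j n | ℱ j]

/-- The conditional expectation given `ℱ j` of the exponential of `y_j + ⋯ + y_{n-1}`. -/
def tailExp (μ : Measure O) (ℱ : Filtration ℕ m0) (n : ℕ) (y : ℕ → O → ℂ) (j : ℕ) : O → ℂ :=
  μ[fun ω => Complex.exp (blockSum y j n ω) | ℱ j]

/-- The unconditional mean of `tailExp`. -/
def tailMean (μ : Measure O) (n : ℕ) (y : ℕ → O → ℂ) (j : ℕ) : ℂ :=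
  ∫ ω, Complex.exp (blockSum y j n ω) ∂μ

/-- A complex process of essentially bounded variables, `y j` being measurable with respect to
`ℱ (j + 1)`: the σ-algebra `ℱ j` contains what is known before time `j`. -/
structure IsBoundedAdapted (μ : Measure O) (ℱ : Filtration ℕ m0) (y : ℕ → O → ℂ) : Prop where
  meas : ∀ j, AEStronglyMeasurable[ℱ (j + 1)] (y j) μ
  memLp : ∀ j, MemLp (y j) ∞ μ

lemma blockSum_self (j : ℕ) (ω : O) : blockSum y j j ω = 0 := by simp [blockSum]

lemma blockSum_succ_self (j : ℕ) (ω : O) : blockSum y j (j + 1) ω = y j ω := by simp [blockSum]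

lemma blockSum_eq_zero_of_le {j k : ℕ} (hkj : k ≤ j) : blockSum y j k = fun _ => 0 := by
  funext ω
  simp [blockSum, Finset.Ico_eq_empty_of_le hkj]

lemma blockSum_add_blockSum {i j k : ℕ} (hij : i ≤ j) (hjk : j ≤ k) (ω : O) :
    blockSum y i j ω + blockSum y j k ω = blockSum y i k ω :=
  Finset.sum_Ico_consecutive _ hij hjk

lemma blockSum_succ {j k : ℕ} (hjk : j ≤ k) (ω : O) :
    blockSum y j (k + 1) ω = blockSum y j k ω + y k ω :=
  Finset.sum_Ico_succ_top hjk _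

lemma blockSum_const_mul (z : ℂ) (j k : ℕ) (ω : O) :
    blockSum (fun i ω => z * y i ω) j k ω = z * blockSum y j k ω := by
  simp [blockSum, Finset.mul_sum]

lemma tailSum_eq_zero_of_le {j : ℕ} (hj : n ≤ j) : tailSum μ ℱ n y j = fun _ => 0 := by
  rw [tailSum, blockSum_eq_zero_of_le hj]
  exact condExp_zero

lemma tailExp_eq_one_of_le [IsFiniteMeasure μ] {j : ℕ} (hj : n ≤ j) :
    tailExp μ ℱ n y j = fun _ => 1 := by
  simp [tailExp, blockSum_eq_zero_of_le hj, condExp_const (ℱ.le j)]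

lemma tailMean_self [IsProbabilityMeasure μ] : tailMean μ n y n = 1 := by
  simp [tailMean, blockSum_self]

lemma integral_tailExp [IsFiniteMeasure μ] (j : ℕ) :
    ∫ ω, tailExp μ ℱ n y j ω ∂μ = tailMean μ n y j :=
  integral_condExp (ℱ.le j)

namespace IsBoundedAdapted

variable (A : IsBoundedAdapted μ ℱ y)

include A

lemma const_mul (z : ℂ) : IsBoundedAdapted μ ℱ fun j ω => z * y j ω where
  meas j := (A.meas j).const_mul z
  memLp j := (A.memLp j).const_mul z

lemma memLp_blockSum (j k : ℕ) : MemLp (blockSum y j k) ∞ μ :=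
  memLp_finsetSum _ fun i _ => A.memLp i

lemma memLp_cexp_blockSum (j k : ℕ) : MemLp (fun ω => Complex.exp (blockSum y j k ω)) ∞ μ :=
  memLp_top_cexp (A.memLp_blockSum j k)

lemma memLp_tailSum (j : ℕ) : MemLp (tailSum μ ℱ n y j) ∞ μ :=
  (A.memLp_blockSum j n).condExp le_top

lemma memLp_tailExp (j : ℕ) : MemLp (tailExp μ ℱ n y j) ∞ μ :=
  (A.memLp_cexp_blockSum j n).condExp le_top

lemma aestronglyMeasurable_blockSum (j k : ℕ) :
    AEStronglyMeasurable[ℱ k] (blockSum y j k) μ := by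
  have hsum : blockSum y j k = ∑ i ∈ Finset.Ico j k, y i := by
    funext ω
    simp [blockSum]
  rw [hsum]
  exact Finset.sum_induction _ (fun f => AEStronglyMeasurable[ℱ k] f μ) (fun _ _ => .add)
    aestronglyMeasurable_const fun i hi => (A.meas i).mono (ℱ.mono (Finset.mem_Ico.1 hi).2)

variable [IsFiniteMeasure μ]

lemma tailSum_eq {j k : ℕ} (hjk : j ≤ k) (hkn : k ≤ n) :
    tailSum μ ℱ n y j =ᵐ[μ] μ[blockSum y j k + tailSum μ ℱ n y k | ℱ j] := by
  have hsplit : blockSum y j n = blockSum y j k + blockSum y k n :=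
    funext fun ω => (blockSum_add_blockSum hjk hkn ω).symm
  have htower : μ[tailSum μ ℱ n y k | ℱ j] =ᵐ[μ] μ[blockSum y k n | ℱ j] :=
    condExp_condExp_of_le (ℱ.mono hjk) (ℱ.le k)
  have hblock := (A.memLp_blockSum j k).integrable le_top
  rw [tailSum, hsplit]
  filter_upwards [condExp_add (m := ℱ j) hblock ((A.memLp_blockSum k n).integrable le_top),
    condExp_add (m := ℱ j) hblock ((A.memLp_tailSum (n := n) k).integrable le_top), htower]
    with ω h₁ h₂ h₃
  rw [h₁, h₂, Pi.add_apply, Pi.add_apply, h₃]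

lemma tailExp_eq {j k : ℕ} (hjk : j ≤ k) (hkn : k ≤ n) :
    tailExp μ ℱ n y j =ᵐ[μ]
      μ[fun ω => Complex.exp (blockSum y j k ω) * tailExp μ ℱ n y k ω | ℱ j] := by
  have hsplit : (fun ω => Complex.exp (blockSum y j n ω)) =
      fun ω => Complex.exp (blockSum y j k ω) * Complex.exp (blockSum y k n ω) := by
    funext ω
    rw [← Complex.exp_add, blockSum_add_blockSum hjk hkn]
  have hpull := condExp_complex_mul_left (𝒢 := ℱ k)
    (Complex.continuous_exp.comp_aestronglyMeasurable (A.aestronglyMeasurable_blockSum j k))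
    (((A.memLp_cexp_blockSum k n).mul (r := ∞) (A.memLp_cexp_blockSum j k)).integrable le_top)
    ((A.memLp_cexp_blockSum k n).integrable le_top)
  rw [tailExp, hsplit]
  exact (condExp_condExp_of_le (ℱ.mono hjk) (ℱ.le k)).symm.trans (condExp_congr_ae hpull)

lemma sum_integral_norm_sq_eq (h0 : ∀ j < n, μ[y j | ℱ j] =ᵐ[μ] 0) :
    ∑ j ∈ Finset.range n, ∫ ω, ‖y j ω‖ ^ 2 ∂μ = ∫ ω, ‖blockSum y 0 n ω‖ ^ 2 ∂μ := by
  induction n with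
  | zero => simp [blockSum_self]
  | succ n ih =>
    simp_rw [Finset.sum_range_succ, blockSum_succ n.zero_le]
    rw [ih fun j hj => h0 j (hj.trans n.lt_succ_self),
      integral_norm_add_sq_of_condExp_eq_zero (ℱ.le n)
        ((A.memLp_blockSum 0 n).mono_exponent le_top) ((A.memLp n).mono_exponent le_top)
        (A.aestronglyMeasurable_blockSum 0 n) (h0 n n.lt_succ_self)]

end IsBoundedAdapted

end BoundedAdapted

section SmallMartingaleDiff

variable {O : Type*} {m0 : MeasurableSpace O} {μ : Measure O} {ℱ : Filtration ℕ m0}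
  {D : ℕ → O → ℂ} {n : ℕ}

lemma ne_zero_and_norm_div_integral_sub_one_le [IsProbabilityMeasure μ] {G : O → ℂ} {c : ℂ}
    (hG : Integrable G μ) (hc : c ≠ 0) (hGc : ∀ᵐ ω ∂μ, ‖G ω - c‖ ≤ 1 / 36 * ‖c‖) :
    ∫ ω, G ω ∂μ ≠ 0 ∧ ∀ᵐ ω ∂μ, ‖G ω / (∫ ω, G ω ∂μ) - 1‖ ≤ 1 / 12 := by
  set b := ∫ ω, G ω ∂μ
  have hc_pos : 0 < ‖c‖ := norm_pos_iff.2 hc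
  have hbc : ‖b - c‖ ≤ 1 / 36 * ‖c‖ := by
    have hint : b - c = ∫ ω, (G ω - c) ∂μ := by
      rw [integral_sub hG (integrable_const c), integral_const, probReal_univ, one_smul]
    rw [hint]
    simpa using norm_integral_le_of_norm_le_const hGc
  have hb : 35 / 36 * ‖c‖ ≤ ‖b‖ := by
    linarith [norm_sub_norm_le c b, norm_sub_rev b c]
  have hb_pos : 0 < ‖b‖ := by linarith
  have hb_ne : b ≠ 0 := norm_pos_iff.1 hb_pos
  refine ⟨hb_ne, ?_⟩
  filter_upwards [hGc] with ω hω
  rw [div_sub_one hb_ne, norm_div, div_le_iff₀ hb_pos, ← sub_sub_sub_cancel_right _ _ c]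
  linarith [norm_sub_le (G ω - c) (b - c)]

/-- Small bounded martingale differences `D 0, …, D (n - 1)` whose conditional tail exponentials
are nearly constant. -/
structure IsSmallMartingaleDiff (μ : Measure O) (ℱ : Filtration ℕ m0) (n : ℕ)
    (D : ℕ → O → ℂ) : Prop extends IsBoundedAdapted μ ℱ D where
  norm_le : ∀ j < n, ∀ᵐ ω ∂μ, ‖D j ω‖ ≤ 1 / 4
  condExp_eq_zero : ∀ j < n, μ[D j | ℱ j] =ᵐ[μ] 0
  tailExp_near_const : ∀ j ≤ n, ∃ c : ℂ, c ≠ 0 ∧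
    ∀ᵐ ω ∂μ, ‖tailExp μ ℱ n D j ω - c‖ ≤ 1 / 36 * ‖c‖

namespace IsSmallMartingaleDiff

variable (S : IsSmallMartingaleDiff μ ℱ n D)

include S

lemma memLp_tailExp_div_tailMean (j : ℕ) :
    MemLp (fun ω => tailExp μ ℱ n D j ω / tailMean μ n D j) ∞ μ := by
  simpa only [div_eq_mul_inv] using (S.memLp_tailExp j).mul_const (tailMean μ n D j)⁻¹

variable [IsProbabilityMeasure μ]

lemma tailMean_ne_zero_and_norm_sub_one_le {j : ℕ} (hj : j ≤ n) :
    tailMean μ n D j ≠ 0 ∧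
      ∀ᵐ ω ∂μ, ‖tailExp μ ℱ n D j ω / tailMean μ n D j - 1‖ ≤ 1 / 12 := by
  obtain ⟨c, hc, hnear⟩ := S.tailExp_near_const j hj
  rw [← integral_tailExp (ℱ := ℱ) j]
  exact ne_zero_and_norm_div_integral_sub_one_le ((S.memLp_tailExp j).integrable le_top) hc hnear

lemma tailMean_ne_zero {j : ℕ} (hj : j ≤ n) : tailMean μ n D j ≠ 0 :=
  (S.tailMean_ne_zero_and_norm_sub_one_le hj).1

lemma integral_tailExp_div_tailMean {j : ℕ} (hj : j ≤ n) :
    ∫ ω, tailExp μ ℱ n D j ω / tailMean μ n D j ∂μ = 1 := by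
  rw [integral_div, integral_tailExp, div_self (S.tailMean_ne_zero hj)]

lemma eigen {j : ℕ} (hj : j < n) :
    (fun ω => tailMean μ n D j / tailMean μ n D (j + 1) *
        (tailExp μ ℱ n D j ω / tailMean μ n D j)) =ᵐ[μ]
      μ[fun ω => Complex.exp (D j ω) *
        (tailExp μ ℱ n D (j + 1) ω / tailMean μ n D (j + 1)) | ℱ j] := by
  have hrec := S.tailExp_eq j.le_succ hj
  simp only [Nat.succ_eq_add_one, blockSum_succ_self] at hrec
  have hscale : (fun ω => Complex.exp (D j ω) *
      (tailExp μ ℱ n D (j + 1) ω / tailMean μ n D (j + 1))) =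
      (tailMean μ n D (j + 1))⁻¹ • fun ω => Complex.exp (D j ω) * tailExp μ ℱ n D (j + 1) ω := by
    funext ω
    simp only [Pi.smul_apply, smul_eq_mul]
    ring
  have hj0 := S.tailMean_ne_zero hj.le
  have hj1 := S.tailMean_ne_zero (Nat.succ_le_of_lt hj)
  rw [hscale]
  filter_upwards [hrec, condExp_smul (m := ℱ j) (μ := μ) (tailMean μ n D (j + 1))⁻¹
    (fun ω => Complex.exp (D j ω) * tailExp μ ℱ n D (j + 1) ω)] with ω h₁ h₂
  rw [h₂, Pi.smul_apply, ← h₁, smul_eq_mul]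
  field_simp

lemma isTwistedStep {j : ℕ} (hj : j < n) :
    IsTwistedStep μ (ℱ j) (D j) (fun ω => tailExp μ ℱ n D (j + 1) ω / tailMean μ n D (j + 1))
      (fun ω => tailExp μ ℱ n D j ω / tailMean μ n D j)
      (tailMean μ n D j / tailMean μ n D (j + 1)) where
  le := ℱ.le j
  memLp_diff := S.memLp j
  norm_diff_le := S.norm_le j hj
  condExp_diff := S.condExp_eq_zero j hj
  memLp := S.memLp_tailExp_div_tailMean (j + 1)
  memLp' := S.memLp_tailExp_div_tailMean j
  norm_sub_one_le := (S.tailMean_ne_zero_and_norm_sub_one_le hj).2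
  norm_sub_one_le' := (S.tailMean_ne_zero_and_norm_sub_one_le hj.le).2
  integral_eq_one := S.integral_tailExp_div_tailMean hj
  integral_eq_one' := S.integral_tailExp_div_tailMean hj.le
  eigen := S.eigen hj

lemma norm_tailMean_div_sub_one_le_half {j : ℕ} (hj : j < n) :
    ‖tailMean μ n D j / tailMean μ n D (j + 1) - 1‖ ≤ 1 / 2 :=
  (S.isTwistedStep hj).norm_sub_one_le_half

lemma sum_norm_tailMean_div_sub_one_le :
    ∑ j ∈ Finset.range n, ‖tailMean μ n D j / tailMean μ n D (j + 1) - 1‖ ≤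
      6 * ∫ ω, ‖blockSum D 0 n ω‖ ^ 2 ∂μ := by
  rw [← S.sum_integral_norm_sq_eq S.condExp_eq_zero]
  refine sum_norm_sub_one_le_of_isTwistedStep (ℱ := ℱ)
    (h := fun j ω => tailExp μ ℱ n D j ω / tailMean μ n D j) (fun j hj => S.isTwistedStep hj) ?_
  simp only [tailExp_eq_one_of_le le_rfl, tailMean_self, div_one]
  rfl

lemma prod_tailMean_div : ∏ j ∈ Finset.range n, tailMean μ n D j / tailMean μ n D (j + 1) =
    tailMean μ n D 0 := by
  have htele : ∀ k ≤ n, ∏ j ∈ Finset.range k, tailMean μ n D j / tailMean μ n D (j + 1) =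
      tailMean μ n D 0 / tailMean μ n D k := by
    intro k hk
    induction k with
    | zero => simp [S.tailMean_ne_zero]
    | succ k ih =>
      rw [Finset.prod_range_succ, ih (by lia),
        div_mul_div_cancel₀ (S.tailMean_ne_zero (by lia))]
  rw [htele n le_rfl, tailMean_self, div_one]

lemma sum_norm_log_tailMean_div_le :
    ∑ j ∈ Finset.range n, ‖Complex.log (tailMean μ n D j / tailMean μ n D (j + 1))‖ ≤
      9 * ∫ ω, ‖blockSum D 0 n ω‖ ^ 2 ∂μ := by
  have hlog : ∀ j ∈ Finset.range n, ‖Complex.log (tailMean μ n D j / tailMean μ n D (j + 1))‖ ≤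
      3 / 2 * ‖tailMean μ n D j / tailMean μ n D (j + 1) - 1‖ := fun j hj => by
    simpa using Complex.norm_log_one_add_half_le_self
      (S.norm_tailMean_div_sub_one_le_half (Finset.mem_range.1 hj))
  refine (Finset.sum_le_sum hlog).trans ?_
  rw [← Finset.mul_sum]
  linarith [S.sum_norm_tailMean_div_sub_one_le]

end IsSmallMartingaleDiff

end SmallMartingaleDiff

section DoeblinProcess

variable {O : Type*} {m0 : MeasurableSpace O} {μ : Measure O} {ℱ : Filtration ℕ m0}
  {𝒮 : ℕ → MeasurableSpace O} {n₀ : ℕ} {γ C : ℝ} {y : ℕ → O → ℂ} {n : ℕ}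

/-- The σ-algebras of a Doeblin chain `X`: `𝒮 j` stands for `σ(X_j)` and `ℱ j` for
`σ(X_0, …, X_{j-1})`. The minorization appears as a contraction: a function of `X_{j+n₀}` that
oscillates by `r` around a constant has a conditional expectation given the past before time `j`
that oscillates by at most `(1 - γ) r`. -/
structure IsDoeblinSystem (μ : Measure O) (ℱ : Filtration ℕ m0) (𝒮 : ℕ → MeasurableSpace O)
    (n₀ : ℕ) (γ : ℝ) : Prop where
  le : ∀ j, 𝒮 j ≤ ℱ (j + 1)
  bot : ℱ 0 = ⊥
  pos : 0 < γ
  le_one : γ ≤ 1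
  markov : ∀ j (V : O → ℂ), AEStronglyMeasurable[𝒮 (j + 1)] V μ → MemLp V ∞ μ →
    AEStronglyMeasurable[𝒮 j] (μ[V|ℱ (j + 1)]) μ
  contraction : ∀ j (V : O → ℂ) (c : ℂ) (r : ℝ), AEStronglyMeasurable[𝒮 (j + n₀)] V μ →
    MemLp V ∞ μ → (∀ᵐ ω ∂μ, ‖V ω - c‖ ≤ r) →
    ∃ c' : ℂ, ‖c' - c‖ ≤ γ * r ∧ ∀ᵐ ω ∂μ, ‖μ[V | ℱ j] ω - c'‖ ≤ (1 - γ) * r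

/-- A process `y j = f_j(X_j)` over a Doeblin system with `|y j| ≤ C`. -/
structure IsDoeblinProcess (μ : Measure O) (ℱ : Filtration ℕ m0) (𝒮 : ℕ → MeasurableSpace O)
    (n₀ : ℕ) (γ C : ℝ) (y : ℕ → O → ℂ) : Prop extends IsDoeblinSystem μ ℱ 𝒮 n₀ γ where
  meas : ∀ j, AEStronglyMeasurable[𝒮 j] (y j) μ
  norm_le : ∀ j, ∀ᵐ ω ∂μ, ‖y j ω‖ ≤ C

/-- The scale `C (n₀ + 1) / γ` bounding the influence of the present on the future sums: blocks of
length `n₀ + 1` contribute `C (n₀ + 1)` each, damped by the geometric series in `1 - γ`. -/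
def mixingRadius (C γ : ℝ) (n₀ : ℕ) : ℝ := C * (n₀ + 1 : ℕ) / γ

lemma mixingRadius_const_mul (a C γ : ℝ) (n₀ : ℕ) :
    mixingRadius (a * C) γ n₀ = a * mixingRadius C γ n₀ := by
  rw [mixingRadius, mixingRadius, mul_assoc, mul_div_assoc]

lemma forall_of_backward_steps {P : ℕ → Prop} {n N : ℕ} (hN : 0 < N)
    (base : ∀ j, n ≤ j + N → P j) (step : ∀ j, j + N < n → P (j + N) → P j) (j : ℕ) : P j := by
  induction hk : n - j using Nat.strong_induction_on generalizing j with
  | _ k ih =>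
    rcases le_or_gt n (j + N) with h | h
    · exact base j h
    · exact step j h (ih _ (by lia) _ rfl)

lemma IsDoeblinSystem.aestronglyMeasurable_of_recursion (S : IsDoeblinSystem μ ℱ 𝒮 n₀ γ)
    {T V : ℕ → O → ℂ} (hV : ∀ j, MemLp (V j) ∞ μ)
    (hTV : ∀ j, AEStronglyMeasurable[𝒮 j] (T (j + 1)) μ → AEStronglyMeasurable[𝒮 j] (V j) μ)
    (hend : ∀ j, n ≤ j → AEStronglyMeasurable[⊥] (T j) μ)
    (hrec : ∀ j < n, T j =ᵐ[μ] μ[V j | ℱ j]) (j : ℕ) :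
    AEStronglyMeasurable[𝒮 j] (T (j + 1)) μ := by
  induction j using forall_of_backward_steps (n := n) one_pos with
  | base j hj => exact (hend _ hj).mono bot_le
  | step j hj ih => exact (S.markov j _ (hTV _ ih) (hV _)).congr (hrec _ hj).symm

namespace IsDoeblinProcess

variable (S : IsDoeblinProcess μ ℱ 𝒮 n₀ γ C y)

include S

lemma isBoundedAdapted : IsBoundedAdapted μ ℱ y where
  meas j := (S.meas j).mono (S.le j)
  memLp j := memLp_top_of_bound ((S.meas j).mono ((S.le j).trans (ℱ.le _))) C (S.norm_le j)

lemma const_mul (z : ℂ) : IsDoeblinProcess μ ℱ 𝒮 n₀ γ (‖z‖ * C) fun j ω => z * y j ω where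
  toIsDoeblinSystem := S.toIsDoeblinSystem
  meas j := (S.meas j).const_mul z
  norm_le j := by
    filter_upwards [S.norm_le j] with ω hω
    rw [norm_mul]
    gcongr

variable [IsProbabilityMeasure μ]

lemma bound_nonneg : 0 ≤ C :=
  have ⟨_, hω⟩ := (S.norm_le 0).exists
  (norm_nonneg _).trans hω

lemma mul_le_mixingRadius : C * (n₀ + 1 : ℕ) ≤ mixingRadius C γ n₀ :=
  le_div_self (mul_nonneg S.bound_nonneg (Nat.cast_nonneg _)) S.pos S.le_one

lemma le_mixingRadius : C ≤ mixingRadius C γ n₀ := by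
  refine (le_mul_of_one_le_right S.bound_nonneg ?_).trans S.mul_le_mixingRadius
  exact_mod_cast n₀.succ_pos

lemma mixingRadius_nonneg : 0 ≤ mixingRadius C γ n₀ := S.bound_nonneg.trans S.le_mixingRadius

lemma norm_blockSum_le {j k N : ℕ} (hk : k ≤ j + N) :
    ∀ᵐ ω ∂μ, ‖blockSum y j k ω‖ ≤ C * N := by
  filter_upwards [ae_all_iff.2 S.norm_le] with ω hω
  have hcard : ((k - j : ℕ) : ℝ) ≤ N := by exact_mod_cast (by lia)
  calc ‖blockSum y j k ω‖ ≤ ∑ _i ∈ Finset.Ico j k, C := norm_sum_le_of_le _ fun i _ => hω i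
    _ = C * (k - j : ℕ) := by rw [Finset.sum_const, Nat.card_Ico, nsmul_eq_mul, mul_comm]
    _ ≤ C * N := mul_le_mul_of_nonneg_left hcard S.bound_nonneg

lemma aestronglyMeasurable_tailSum (n j : ℕ) :
    AEStronglyMeasurable[𝒮 j] (tailSum μ ℱ n y (j + 1)) μ := by
  have A := S.isBoundedAdapted
  refine S.aestronglyMeasurable_of_recursion (n := n) (T := tailSum μ ℱ n y)
    (V := fun j => blockSum y j (j + 1) + tailSum μ ℱ n y (j + 1))
    (fun j => (A.memLp_blockSum _ _).add (A.memLp_tailSum _)) (fun j hj => ?_)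
    (fun j hj => ?_) (fun j hj => A.tailSum_eq j.le_succ hj) j
  · refine AEStronglyMeasurable.add ?_ hj
    simpa only [funext (blockSum_succ_self j)] using S.meas j
  · rw [tailSum_eq_zero_of_le hj]
    exact aestronglyMeasurable_const

lemma aestronglyMeasurable_tailExp (n j : ℕ) :
    AEStronglyMeasurable[𝒮 j] (tailExp μ ℱ n y (j + 1)) μ := by
  have A := S.isBoundedAdapted
  refine S.aestronglyMeasurable_of_recursion (n := n) (T := tailExp μ ℱ n y)
    (V := fun j ω => Complex.exp (blockSum y j (j + 1) ω) * tailExp μ ℱ n y (j + 1) ω)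
    (fun j => (A.memLp_tailExp _).mul (A.memLp_cexp_blockSum _ _)) (fun j hj => ?_)
    (fun j hj => ?_) (fun j hj => A.tailExp_eq j.le_succ hj) j
  · refine AEStronglyMeasurable.mul ?_ hj
    simpa only [blockSum_succ_self] using
      Complex.continuous_exp.comp_aestronglyMeasurable (S.meas j)
  · rw [tailExp_eq_one_of_le hj]
    exact aestronglyMeasurable_const

lemma exists_norm_tailSum_sub_le (n j : ℕ) :
    ∃ c : ℂ, ∀ᵐ ω ∂μ, ‖tailSum μ ℱ n y j ω - c‖ ≤ mixingRadius C γ n₀ := by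
  have A := S.isBoundedAdapted
  induction j using forall_of_backward_steps (n := n) n₀.succ_pos with
  | base j hj =>
    refine ⟨0, ?_⟩
    simp only [sub_zero]
    filter_upwards [ae_bdd_norm_condExp_of_ae_bdd_norm (m := ℱ j) (S.norm_blockSum_le hj)]
      with ω hω using hω.trans S.mul_le_mixingRadius
  | step j hj ih =>
    obtain ⟨c, hc⟩ := ih
    obtain ⟨c', -, hc'⟩ := S.contraction j _ c _ (S.aestronglyMeasurable_tailSum n (j + n₀))
      (A.memLp_tailSum _) hc
    refine ⟨c', ?_⟩
    filter_upwards [A.tailSum_eq (Nat.le_add_right j (n₀ + 1)) hj.le,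
      condExp_add (m := ℱ j) ((A.memLp_blockSum j (j + (n₀ + 1))).integrable le_top)
        ((A.memLp_tailSum (n := n) (j + (n₀ + 1))).integrable le_top),
      ae_bdd_norm_condExp_of_ae_bdd_norm (m := ℱ j)
        (S.norm_blockSum_le (j := j) (k := j + (n₀ + 1)) le_rfl), hc']
      with ω hrec hadd hblock htail
    rw [hrec, hadd, Pi.add_apply, add_sub_assoc]
    refine (norm_add_le_of_le hblock htail).trans_eq ?_
    have hγ := S.pos.ne'
    rw [mixingRadius]
    field_simp
    ring

lemma integral_tailSum (hI : ∀ j, ∫ ω, y j ω ∂μ = 0) (n j : ℕ) :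
    ∫ ω, tailSum μ ℱ n y j ω ∂μ = 0 := by
  have hblock : ∫ ω, blockSum y j n ω ∂μ = ∑ i ∈ Finset.Ico j n, ∫ ω, y i ω ∂μ :=
    integral_finsetSum _ fun i _ => (S.isBoundedAdapted.memLp i).integrable le_top
  rw [tailSum, integral_condExp (ℱ.le j), hblock]
  simp [hI]

lemma tailSum_zero (hI : ∀ j, ∫ ω, y j ω ∂μ = 0) (n : ℕ) : tailSum μ ℱ n y 0 = fun _ => 0 := by
  have hint := S.integral_tailSum hI n 0
  rw [tailSum, integral_condExp (ℱ.le 0)] at hint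
  rw [tailSum, S.bot, condExp_bot, hint]

lemma norm_tailSum_le (hI : ∀ j, ∫ ω, y j ω ∂μ = 0) (n j : ℕ) :
    ∀ᵐ ω ∂μ, ‖tailSum μ ℱ n y j ω‖ ≤ 2 * mixingRadius C γ n₀ := by
  obtain ⟨c, hc⟩ := S.exists_norm_tailSum_sub_le n j
  have hcR : ‖c‖ ≤ mixingRadius C γ n₀ := by
    have hint : -c = ∫ ω, (tailSum μ ℱ n y j ω - c) ∂μ := by
      rw [integral_sub ((S.isBoundedAdapted.memLp_tailSum j).integrable le_top)
        (integrable_const c), S.integral_tailSum hI]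
      simp
    rw [← norm_neg, hint]
    simpa using norm_integral_le_of_norm_le_const hc
  filter_upwards [hc] with ω hω
  linarith [norm_le_norm_sub_add (tailSum μ ℱ n y j ω) c]

lemma norm_cexp_blockSum_sub_one_le (hR : mixingRadius C γ n₀ ≤ 1) {j k : ℕ}
    (hk : k ≤ j + (n₀ + 1)) :
    ∀ᵐ ω ∂μ, ‖Complex.exp (blockSum y j k ω) - 1‖ ≤ 2 * γ * mixingRadius C γ n₀ := by
  have hscale : γ * mixingRadius C γ n₀ = C * (n₀ + 1 : ℕ) := mul_div_cancel₀ _ S.pos.ne'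
  filter_upwards [S.norm_blockSum_le hk] with ω hω
  refine (Complex.norm_exp_sub_one_le (hω.trans (S.mul_le_mixingRadius.trans hR))).trans ?_
  linarith

lemma norm_tailExp_sub_condExp_le (hR : mixingRadius C γ n₀ ≤ 1) {j k : ℕ} (hjk : j ≤ k)
    (hk : k ≤ j + (n₀ + 1)) (hkn : k ≤ n) {B : ℝ} (hB : ∀ᵐ ω ∂μ, ‖tailExp μ ℱ n y k ω‖ ≤ B) :
    ∀ᵐ ω ∂μ, ‖tailExp μ ℱ n y j ω - μ[tailExp μ ℱ n y k | ℱ j] ω‖ ≤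
      2 * γ * mixingRadius C γ n₀ * B := by
  have A := S.isBoundedAdapted
  have hM := A.memLp_tailExp (n := n) k
  have hEM : Integrable (fun ω => Complex.exp (blockSum y j k ω) * tailExp μ ℱ n y k ω) μ :=
    (hM.mul (r := ∞) (A.memLp_cexp_blockSum j k)).integrable le_top
  have hdiff : ∀ᵐ ω ∂μ, ‖((fun ω => Complex.exp (blockSum y j k ω) * tailExp μ ℱ n y k ω) -
      tailExp μ ℱ n y k) ω‖ ≤ 2 * γ * mixingRadius C γ n₀ * B := by
    filter_upwards [S.norm_cexp_blockSum_sub_one_le hR hk, hB] with ω hexp hBω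
    have hscale : 0 ≤ 2 * γ * mixingRadius C γ n₀ := (norm_nonneg _).trans hexp
    rw [Pi.sub_apply, ← sub_one_mul, norm_mul]
    gcongr
  filter_upwards [A.tailExp_eq hjk hkn, condExp_sub (m := ℱ j) hEM (hM.integrable le_top),
    ae_bdd_norm_condExp_of_ae_bdd_norm (m := ℱ j) hdiff] with ω hrec hsub hle
  rwa [hrec, ← Pi.sub_apply, ← hsub]

lemma exists_norm_tailExp_sub_le (hR : mixingRadius C γ n₀ ≤ 1 / 16) (n j : ℕ) :
    ∃ c : ℂ, c ≠ 0 ∧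
      ∀ᵐ ω ∂μ, ‖tailExp μ ℱ n y j ω - c‖ ≤ 4 * mixingRadius C γ n₀ * ‖c‖ := by
  have A := S.isBoundedAdapted
  have hR0 := S.mixingRadius_nonneg
  have hγ0 := S.pos
  have hR1 : mixingRadius C γ n₀ ≤ 1 := by linarith
  have hγR : γ * mixingRadius C γ n₀ ≤ mixingRadius C γ n₀ := mul_le_of_le_one_left hR0 S.le_one
  induction j using forall_of_backward_steps (n := n) n₀.succ_pos with
  | base j hj =>
    refine ⟨1, one_ne_zero, ?_⟩
    filter_upwards [ae_norm_condExp_sub_const_le (ℱ.le j)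
      ((A.memLp_cexp_blockSum j n).integrable le_top)
      (S.norm_cexp_blockSum_sub_one_le hR1 hj)] with ω hω
    rw [norm_one]
    exact hω.trans (by linarith)
  | step j hj ih =>
    obtain ⟨c, hc0, hc⟩ := ih
    obtain ⟨c', hcc', hc'⟩ := S.contraction j _ c _ (S.aestronglyMeasurable_tailExp n (j + n₀))
      (A.memLp_tailExp _) hc
    have hc_pos : 0 < ‖c‖ := norm_pos_iff.2 hc0
    have hc'_ge : (1 - 4 * (γ * mixingRadius C γ n₀)) * ‖c‖ ≤ ‖c'‖ := by
      linarith [norm_sub_norm_le c c', norm_sub_rev c c']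
    refine ⟨c', norm_pos_iff.1 (by nlinarith), ?_⟩
    have hbound : ∀ᵐ ω ∂μ, ‖tailExp μ ℱ n y (j + (n₀ + 1)) ω‖ ≤
        (1 + 4 * mixingRadius C γ n₀) * ‖c‖ := by
      filter_upwards [hc] with ω hω
      linarith [norm_le_norm_sub_add (tailExp μ ℱ n y (j + (n₀ + 1)) ω) c]
    filter_upwards [S.norm_tailExp_sub_condExp_le hR1 (Nat.le_add_right j (n₀ + 1)) le_rfl hj.le
      hbound, hc'] with ω hblock htail
    have htri := norm_add_le_of_le hblock htail
    rw [← add_assoc, sub_add_sub_cancel] at htri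
    nlinarith [mul_nonneg (mul_nonneg hγ0.le hR0) hc_pos.le]

end IsDoeblinProcess

end DoeblinProcess

section LogMGF

variable {O : Type*} {m0 : MeasurableSpace O} {μ : Measure O} {ℱ : Filtration ℕ m0}
  {𝒮 : ℕ → MeasurableSpace O} {n₀ : ℕ} {γ C : ℝ} {y : ℕ → O → ℂ} {n : ℕ}

/-- The martingale differences obtained from `y` by adding the coboundary of `tailSum`. -/
def martingaleDiff (μ : Measure O) (ℱ : Filtration ℕ m0) (n : ℕ) (y : ℕ → O → ℂ) (j : ℕ)
    (ω : O) : ℂ :=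
  y j ω + tailSum μ ℱ n y (j + 1) ω - tailSum μ ℱ n y j ω

lemma blockSum_martingaleDiff {j : ℕ} (hj : j ≤ n) (ω : O) :
    blockSum (martingaleDiff μ ℱ n y) j n ω = blockSum y j n ω - tailSum μ ℱ n y j ω := by
  simp only [blockSum, martingaleDiff, add_sub_assoc]
  rw [Finset.sum_add_distrib, Finset.sum_Ico_sub (fun i => tailSum μ ℱ n y i ω) hj,
    tailSum_eq_zero_of_le le_rfl, zero_sub, sub_eq_add_neg]

lemma IsBoundedAdapted.martingaleDiff (A : IsBoundedAdapted μ ℱ y) (n : ℕ) :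
    IsBoundedAdapted μ ℱ (martingaleDiff μ ℱ n y) where
  meas j :=
    ((A.meas j).add stronglyMeasurable_condExp.aestronglyMeasurable).sub
      (stronglyMeasurable_condExp.mono (ℱ.mono j.le_succ)).aestronglyMeasurable
  memLp j := ((A.memLp j).add (A.memLp_tailSum _)).sub (A.memLp_tailSum _)

lemma IsBoundedAdapted.condExp_martingaleDiff [IsFiniteMeasure μ] (A : IsBoundedAdapted μ ℱ y)
    {j : ℕ} (hj : j < n) : μ[_root_.martingaleDiff μ ℱ n y j | ℱ j] =ᵐ[μ] 0 := by
  have hT := (A.memLp_tailSum (n := n) j).integrable le_top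
  have hyT := ((A.memLp j).add (A.memLp_tailSum (n := n) (j + 1))).integrable le_top
  have hself : μ[tailSum μ ℱ n y j | ℱ j] = tailSum μ ℱ n y j :=
    condExp_of_stronglyMeasurable (ℱ.le j) stronglyMeasurable_condExp hT
  have hrec := A.tailSum_eq j.le_succ hj
  rw [show blockSum y j (j + 1) = y j from funext (blockSum_succ_self j)] at hrec
  filter_upwards [condExp_sub (m := ℱ j) hyT hT, hrec] with ω hsub hrec
  refine hsub.trans ?_
  rw [Pi.sub_apply, hself, hrec, sub_self, Pi.zero_apply]

namespace IsDoeblinProcess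

variable (S : IsDoeblinProcess μ ℱ 𝒮 n₀ γ C y) [IsProbabilityMeasure μ]

include S

lemma norm_martingaleDiff_le (hI : ∀ j, ∫ ω, y j ω ∂μ = 0) (n j : ℕ) :
    ∀ᵐ ω ∂μ, ‖martingaleDiff μ ℱ n y j ω‖ ≤ 5 * mixingRadius C γ n₀ := by
  filter_upwards [S.norm_le j, S.norm_tailSum_le hI n j, S.norm_tailSum_le hI n (j + 1)]
    with ω hy hj hj1
  have htri := norm_sub_le_of_le (norm_add_le_of_le hy hj1) hj
  rw [martingaleDiff]
  linarith [S.le_mixingRadius]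

lemma tailExp_martingaleDiff {z : ℂ} {j : ℕ} (hj : j ≤ n) :
    tailExp μ ℱ n (fun j ω => z * martingaleDiff μ ℱ n y j ω) j =ᵐ[μ]
      fun ω => Complex.exp (-(z * tailSum μ ℱ n y j ω)) *
        tailExp μ ℱ n (fun j ω => z * y j ω) j ω := by
  have A := S.isBoundedAdapted
  have hsplit : (fun ω => Complex.exp (blockSum (fun j ω => z * martingaleDiff μ ℱ n y j ω) j n ω))
      = fun ω => Complex.exp (-(z * tailSum μ ℱ n y j ω)) *
        Complex.exp (blockSum (fun j ω => z * y j ω) j n ω) := by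
    funext ω
    rw [blockSum_const_mul, blockSum_const_mul, blockSum_martingaleDiff hj, ← Complex.exp_add]
    congr 1
    ring
  have hT : AEStronglyMeasurable[ℱ j] (fun ω => Complex.exp (-(z * tailSum μ ℱ n y j ω))) μ :=
    (Complex.continuous_exp.comp (continuous_const.mul continuous_id).neg).comp_aestronglyMeasurable
      stronglyMeasurable_condExp.aestronglyMeasurable
  have hE := (A.const_mul z).memLp_cexp_blockSum j n
  rw [tailExp, hsplit]
  exact condExp_complex_mul_left hT ((hE.mul (r := ∞)
    (memLp_top_cexp ((A.memLp_tailSum j).const_mul z).neg)).integrable le_top)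
      (hE.integrable le_top)

lemma isSmallMartingaleDiff (hI : ∀ j, ∫ ω, y j ω ∂μ = 0) (n : ℕ) {z : ℂ}
    (hz : ‖z‖ * mixingRadius C γ n₀ ≤ 1 / 432) :
    IsSmallMartingaleDiff μ ℱ n fun j ω => z * martingaleDiff μ ℱ n y j ω where
  toIsBoundedAdapted := (S.isBoundedAdapted.martingaleDiff n).const_mul z
  norm_le j _ := by
    filter_upwards [S.norm_martingaleDiff_le hI n j] with ω hω
    rw [norm_mul]
    linarith [mul_le_mul_of_nonneg_left hω (norm_nonneg z)]
  condExp_eq_zero j hj := by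
    filter_upwards [condExp_smul (m := ℱ j) (μ := μ) z (martingaleDiff μ ℱ n y j),
      S.isBoundedAdapted.condExp_martingaleDiff hj] with ω hsmul h0
    refine hsmul.trans ?_
    simp [h0]
  tailExp_near_const j hj := by
    obtain ⟨c, hc0, hc⟩ := (S.const_mul z).exists_norm_tailExp_sub_le
      (by rw [mixingRadius_const_mul]; linarith) n j
    rw [mixingRadius_const_mul] at hc
    refine ⟨c, hc0, ?_⟩
    filter_upwards [S.tailExp_martingaleDiff (z := z) hj, hc, S.norm_tailSum_le hI n j]
      with ω heq hcω hT
    set w := -(z * tailSum μ ℱ n y j ω)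
    set G := tailExp μ ℱ n (fun j ω => z * y j ω) j ω
    have hw : ‖w‖ ≤ 2 * (‖z‖ * mixingRadius C γ n₀) := by
      rw [norm_neg, norm_mul]
      linarith [mul_le_mul_of_nonneg_left hT (norm_nonneg z)]
    have hexp : ‖Complex.exp w - 1‖ ≤ 4 / 432 :=
      (Complex.norm_exp_sub_one_le (hw.trans (by linarith))).trans (by linarith)
    have hGc : ‖G - c‖ ≤ 4 / 432 * ‖c‖ :=
      hcω.trans (mul_le_mul_of_nonneg_right (by linarith) (norm_nonneg c))
    have hG : ‖G‖ ≤ 2 * ‖c‖ := by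
      linarith [norm_le_norm_sub_add G c, norm_nonneg c]
    have hsplit : Complex.exp w * G - c = (Complex.exp w - 1) * G + (G - c) := by ring
    have htri := norm_add_le_of_le (norm_mul_le_of_le hexp hG) hGc
    rw [heq, hsplit]
    linarith

end IsDoeblinProcess

lemma differentiable_integral_cexp_mul [IsFiniteMeasure μ] {V : O → ℂ} (hV : MemLp V ∞ μ) :
    Differentiable ℂ fun z : ℂ => ∫ ω, Complex.exp (z * V ω) ∂μ := by
  intro z₀
  obtain ⟨B, hB⟩ := exists_ae_norm_le_of_memLp_top hV
  have hexp : ∀ z : ℂ, MemLp (fun ω => Complex.exp (z * V ω)) ∞ μ := fun z =>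
    memLp_top_cexp (hV.const_mul z)
  refine (hasDerivAt_integral_of_dominated_loc_of_deriv_le (𝕜 := ℂ)
    (F' := fun z ω => Complex.exp (z * V ω) * V ω)
    (bound := fun _ => Real.exp ((‖z₀‖ + 1) * B) * B) (Metric.ball_mem_nhds z₀ one_pos)
    (Eventually.of_forall fun z => (hexp z).1) ((hexp z₀).integrable le_top)
    ((hexp z₀).1.mul hV.1) ?_ (integrable_const _)
    (Eventually.of_forall fun ω z _ => ?_)).2.differentiableAt
  · filter_upwards [hB] with ω hω z hz
    have hz' : ‖z‖ ≤ ‖z₀‖ + 1 := by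
      linarith [norm_sub_norm_le z z₀, mem_ball_iff_norm.1 hz]
    have hre : (z * V ω).re ≤ (‖z₀‖ + 1) * B :=
      (Complex.re_le_norm _).trans (norm_mul_le_of_le hz' hω)
    rw [norm_mul, Complex.norm_exp]
    gcongr
  · simpa using ((hasDerivAt_id z).mul_const (V ω)).cexp

lemma mem_slitPlane_of_norm_sub_one_le_half {w : ℂ} (hw : ‖w - 1‖ ≤ 1 / 2) :
    w ∈ Complex.slitPlane := by
  simpa using Complex.mem_slitPlane_of_norm_lt_one (hw.trans_lt (by norm_num))

theorem IsDoeblinProcess.exists_log_mgf [IsProbabilityMeasure μ]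
    (S : IsDoeblinProcess μ ℱ 𝒮 n₀ γ C y) (hI : ∀ j, ∫ ω, y j ω ∂μ = 0) (n : ℕ) {δ : ℝ}
    (hδ : δ * mixingRadius C γ n₀ ≤ 1 / 432) :
    ∃ Λ : ℂ → ℂ, DifferentiableOn ℂ Λ (Metric.ball 0 δ) ∧ ∀ z ∈ Metric.ball (0 : ℂ) δ,
      Complex.exp (Λ z) = ∫ ω, Complex.exp (z * blockSum y 0 n ω) ∂μ ∧
      ‖Λ z‖ ≤ 9 * ‖z‖ ^ 2 * ∫ ω, ‖blockSum y 0 n ω‖ ^ 2 ∂μ := by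
  have A := S.isBoundedAdapted.martingaleDiff n
  set b : ℕ → ℂ → ℂ := fun j z => tailMean μ n (fun j ω => z * martingaleDiff μ ℱ n y j ω) j
  have hb : ∀ j, Differentiable ℂ (b j) := fun j => by
    simp only [b, tailMean, blockSum_const_mul]
    exact differentiable_integral_cexp_mul (A.memLp_blockSum j n)
  have hsmall : ∀ z ∈ Metric.ball (0 : ℂ) δ,
      IsSmallMartingaleDiff μ ℱ n fun j ω => z * martingaleDiff μ ℱ n y j ω := fun z hz =>
    S.isSmallMartingaleDiff hI n ((mul_le_mul_of_nonneg_right (mem_ball_zero_iff.1 hz).le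
      S.mixingRadius_nonneg).trans hδ)
  have hsum : ∀ z ω, blockSum (fun j ω => z * martingaleDiff μ ℱ n y j ω) 0 n ω =
      z * blockSum y 0 n ω := fun z ω => by
    rw [blockSum_const_mul, blockSum_martingaleDiff n.zero_le, S.tailSum_zero hI, sub_zero]
  refine ⟨fun z => ∑ j ∈ Finset.range n, Complex.log (b j z / b (j + 1) z), ?_, fun z hz => ?_⟩
  · refine DifferentiableOn.fun_sum fun j hj => ?_
    have hj := Finset.mem_range.1 hj
    refine ((hb j).differentiableOn.div (hb (j + 1)).differentiableOn fun z hz =>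
      (hsmall z hz).tailMean_ne_zero hj).clog fun z hz => ?_
    exact mem_slitPlane_of_norm_sub_one_le_half ((hsmall z hz).norm_tailMean_div_sub_one_le_half hj)
  have D := hsmall z hz
  refine ⟨?_, ?_⟩
  · rw [Complex.exp_sum, Finset.prod_congr rfl fun j hj => Complex.exp_log
      (div_ne_zero (D.tailMean_ne_zero (Finset.mem_range.1 hj).le)
        (D.tailMean_ne_zero (Finset.mem_range.1 hj))), D.prod_tailMean_div, tailMean]
    simp_rw [hsum]
  · have hlog := (norm_sum_le _ _).trans D.sum_norm_log_tailMean_div_le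
    simp_rw [hsum, norm_mul, mul_pow] at hlog
    rwa [integral_const_mul, ← mul_assoc] at hlog

end LogMGF

section CubicRemainder

variable {O : Type*} {m0 : MeasurableSpace O} {μ : Measure O} {V : O → ℝ}

lemma integral_cexp_mul_sub_taylor [IsProbabilityMeasure μ] (hV : MemLp V ∞ μ)
    (h0 : ∫ ω, V ω ∂μ = 0) (z : ℂ) :
    ∫ ω, Complex.exp (z * V ω) ∂μ - 1 - (∫ ω, V ω ^ 2 ∂μ : ℝ) * z ^ 2 / 2 =
      ∫ ω, (Complex.exp (z * V ω) - ∑ m ∈ Finset.range 3, (z * V ω) ^ m / m.factorial) ∂μ := by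
  have hVc : MemLp (fun ω => (V ω : ℂ)) ∞ μ := hV.ofReal
  have hexp := (memLp_top_cexp (hVc.const_mul z)).integrable le_top
  have hlin := (hVc.const_mul z).integrable le_top
  have hsq : Integrable (fun ω => z ^ 2 / 2 * ((V ω ^ 2 : ℝ) : ℂ)) μ :=
    (hV.mono_exponent le_top).integrable_sq.ofReal.const_mul _
  have hsplit : ∀ ω, Complex.exp (z * V ω) -
      ∑ m ∈ Finset.range 3, (z * V ω) ^ m / (m.factorial : ℂ) =
        Complex.exp (z * V ω) - 1 - z * V ω - z ^ 2 / 2 * ((V ω ^ 2 : ℝ) : ℂ) := fun ω => by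
    simp [Finset.sum_range_succ, Nat.factorial]
    ring
  simp_rw [hsplit]
  have hexp_sub_one : Integrable (fun ω => Complex.exp (z * V ω) - 1) μ :=
    hexp.sub (integrable_const _)
  have hexp_sub_lin : Integrable (fun ω => Complex.exp (z * V ω) - 1 - z * V ω) μ :=
    hexp_sub_one.sub hlin
  rw [integral_sub hexp_sub_lin hsq, integral_sub hexp_sub_one hlin,
    integral_sub hexp (integrable_const _),
    integral_const_mul, integral_const_mul, integral_complex_ofReal, integral_complex_ofReal, h0]
  simp
  ring

lemma norm_integral_cexp_mul_sub_taylor_le [IsProbabilityMeasure μ] (hV : MemLp V ∞ μ) {B : ℝ}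
    (hB : ∀ᵐ ω ∂μ, ‖V ω‖ ≤ B) (h0 : ∫ ω, V ω ∂μ = 0) {z : ℂ} (hz : ‖z‖ * B ≤ 1) :
    ‖∫ ω, Complex.exp (z * V ω) ∂μ - 1 - (∫ ω, V ω ^ 2 ∂μ : ℝ) * z ^ 2 / 2‖ ≤
      B ^ 3 * ‖z‖ ^ 3 := by
  rw [integral_cexp_mul_sub_taylor hV h0]
  refine (norm_integral_le_of_norm_le_const (C := B ^ 3 * ‖z‖ ^ 3) ?_).trans (by simp)
  filter_upwards [hB] with ω hω
  have hzV : ‖z * V ω‖ ≤ ‖z‖ * B := by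
    rw [norm_mul, Complex.norm_real]
    gcongr
  calc ‖Complex.exp (z * V ω) - ∑ m ∈ Finset.range 3, (z * V ω) ^ m / (m.factorial : ℂ)‖
      ≤ ‖z * V ω‖ ^ 3 * ((Nat.succ 3 : ℕ) * ((Nat.factorial 3 : ℕ) * (3 : ℕ) : ℝ)⁻¹) :=
        Complex.exp_bound (hzV.trans hz) (by norm_num)
    _ ≤ ‖z * V ω‖ ^ 3 * 1 := by
        gcongr
        norm_num [Nat.factorial]
    _ ≤ (‖z‖ * B) ^ 3 * 1 := by gcongr
    _ = B ^ 3 * ‖z‖ ^ 3 := by ring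

lemma isBigO_integral_cexp_mul_sub_taylor [IsProbabilityMeasure μ] (hV : MemLp V ∞ μ)
    (h0 : ∫ ω, V ω ∂μ = 0) :
    (fun z : ℂ => ∫ ω, Complex.exp (z * V ω) ∂μ - 1 - (∫ ω, V ω ^ 2 ∂μ : ℝ) * z ^ 2 / 2)
      =O[nhds 0] fun z => ‖z‖ ^ 3 := by
  obtain ⟨B, hB⟩ := exists_ae_norm_le_of_memLp_top (hV.ofReal (K := ℂ))
  have hsmall : ∀ᶠ z : ℂ in nhds 0, ‖z‖ * B < 1 :=
    Tendsto.eventually_lt_const one_pos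
      ((continuous_norm.mul continuous_const).tendsto' 0 0 (by simp))
  refine Asymptotics.IsBigO.of_bound (B ^ 3) ?_
  filter_upwards [hsmall] with z hz
  rw [norm_pow, norm_norm]
  exact norm_integral_cexp_mul_sub_taylor_le hV (by simpa using hB) h0 hz.le

lemma isBigO_log_mgf_sub [IsProbabilityMeasure μ] (hV : MemLp V ∞ μ) (h0 : ∫ ω, V ω ∂μ = 0)
    {Λ : ℂ → ℂ} (hexp : ∀ᶠ z in nhds 0, Complex.exp (Λ z) = ∫ ω, Complex.exp (z * V ω) ∂μ)
    (hΛ : Λ =O[nhds 0] fun z => ‖z‖ ^ 2) :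
    (fun z => Λ z - (∫ ω, V ω ^ 2 ∂μ : ℝ) * z ^ 2 / 2) =O[nhds 0] fun z => ‖z‖ ^ 3 := by
  have hnorm : Tendsto (fun z : ℂ => ‖z‖) (nhds 0) (nhds 0) :=
    continuous_norm.tendsto' 0 0 norm_zero
  have hΛ0 : Tendsto Λ (nhds 0) (nhds 0) :=
    hΛ.trans_tendsto (by simpa using hnorm.pow 2)
  have hexpΛ : (fun z => Complex.exp (Λ z) - 1 - Λ z) =O[nhds 0] fun z => ‖z‖ ^ 3 := by
    have hquad : (fun z => Complex.exp (Λ z) - 1 - Λ z) =O[nhds 0] fun z => Λ z ^ 2 := by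
      simpa [Function.comp_def, Finset.sum_range_succ, sub_sub] using
        (Complex.exp_sub_sum_range_isBigO_pow 2).comp_tendsto hΛ0
    refine (hquad.trans (hΛ.pow 2)).trans ?_
    simp_rw [← pow_mul]
    exact ((Asymptotics.isLittleO_pow_pow (𝕜 := ℝ) (by norm_num)).comp_tendsto hnorm).isBigO
  refine ((isBigO_integral_cexp_mul_sub_taylor hV h0).sub hexpΛ).congr' ?_ EventuallyEq.rfl
  filter_upwards [hexp] with z hz
  rw [← hz]
  ring

lemma norm_le_mul_norm_pow_three_of_isBigO {h : ℂ → ℂ} {δ M : ℝ}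
    (hd : DifferentiableOn ℂ h (Metric.ball 0 δ))
    (hM : ∀ w ∈ Metric.ball (0 : ℂ) δ, ‖h w‖ ≤ M * ‖w‖ ^ 2)
    (hO : h =O[nhds 0] fun w => ‖w‖ ^ 3) {z : ℂ} (hz : z ∈ Metric.ball (0 : ℂ) δ) :
    ‖h z‖ ≤ M * ‖z‖ ^ 3 / δ := by
  have hδ : 0 < δ := Metric.nonempty_ball.1 ⟨z, hz⟩
  rcases eq_or_ne z 0 with rfl | hz0
  · simpa using hM 0 hz
  have hM0 : 0 ≤ M := nonneg_of_mul_nonneg_left ((norm_nonneg _).trans (hM z hz)) (by positivity)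
  have hh0 : h 0 = 0 := by simpa using hM 0 (Metric.mem_ball_self hδ)
  have ho : (fun w => h w - h 0) =o[nhds 0] fun w => ‖w - 0‖ ^ 2 := by
    simp only [hh0, sub_zero]
    exact hO.trans_isLittleO ((Asymptotics.isLittleO_pow_pow (𝕜 := ℝ) (by norm_num)).comp_tendsto
      (continuous_norm.tendsto' (0 : ℂ) 0 norm_zero))
  have hmaps : Set.MapsTo h (Metric.ball 0 δ) (Metric.closedBall (h 0) (M * δ ^ 2)) := by
    intro w hw
    rw [hh0, mem_closedBall_zero_iff]
    refine (hM w hw).trans ?_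
    rw [mem_ball_zero_iff] at hw
    gcongr
  have key := Complex.dist_le_mul_div_pow_of_mapsTo_ball_of_isLittleO hd hmaps ho hz
  rw [hh0, dist_zero_right, dist_zero_right] at key
  refine key.trans (le_of_eq ?_)
  norm_num [div_pow]
  field_simp

/-- `Λ` is an analytic logarithm of the complex moment generating function of `V` on the disc of
radius `δ`, with the quadratic bound (with absolute constant `9`) that holds for the sums studied
here. -/
structure IsQuadraticLogMGF (μ : Measure O) (V : O → ℝ) (δ : ℝ) (Λ : ℂ → ℂ) : Prop where
  differentiableOn : DifferentiableOn ℂ Λ (Metric.ball 0 δ)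
  exp_eq : ∀ z ∈ Metric.ball (0 : ℂ) δ, Complex.exp (Λ z) = complexMGF V μ z
  norm_le : ∀ z ∈ Metric.ball (0 : ℂ) δ, ‖Λ z‖ ≤ 9 * ‖z‖ ^ 2 * ∫ ω, V ω ^ 2 ∂μ

theorem IsQuadraticLogMGF.norm_sub_gaussian_le [IsProbabilityMeasure μ] {δ : ℝ} {Λ : ℂ → ℂ}
    (h : IsQuadraticLogMGF μ V δ Λ) (hV : MemLp V ∞ μ) (h0 : ∫ ω, V ω ∂μ = 0)
    {z : ℂ} (hz : z ∈ Metric.ball (0 : ℂ) δ) :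
    ‖Λ z - (∫ ω, V ω ^ 2 ∂μ : ℝ) * z ^ 2 / 2‖ ≤ 10 * (∫ ω, V ω ^ 2 ∂μ) * ‖z‖ ^ 3 / δ := by
  have hδ : 0 < δ := Metric.nonempty_ball.1 ⟨z, hz⟩
  have hball := Metric.ball_mem_nhds (0 : ℂ) hδ
  have hv0 : 0 ≤ ∫ ω, V ω ^ 2 ∂μ := integral_nonneg fun _ => sq_nonneg _
  have hO : Λ =O[nhds 0] fun z => ‖z‖ ^ 2 := by
    refine Asymptotics.IsBigO.of_bound (9 * ∫ ω, V ω ^ 2 ∂μ) ?_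
    filter_upwards [hball] with w hw
    refine (h.norm_le w hw).trans_eq ?_
    rw [norm_pow, norm_norm]
    ring
  refine norm_le_mul_norm_pow_three_of_isBigO
    (h.differentiableOn.sub (Differentiable.differentiableOn (by fun_prop))) (fun w hw => ?_)
    (isBigO_log_mgf_sub hV h0 (eventually_of_mem hball h.exp_eq) hO) hz
  calc ‖Λ w - (∫ ω, V ω ^ 2 ∂μ : ℝ) * w ^ 2 / 2‖
      ≤ ‖Λ w‖ + ‖((∫ ω, V ω ^ 2 ∂μ : ℝ) : ℂ) * w ^ 2 / 2‖ := norm_sub_le _ _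
    _ ≤ 9 * ‖w‖ ^ 2 * (∫ ω, V ω ^ 2 ∂μ) + (∫ ω, V ω ^ 2 ∂μ) * ‖w‖ ^ 2 := by
        refine add_le_add (h.norm_le w hw) ?_
        rw [norm_div, norm_mul, norm_pow, Complex.norm_real, Real.norm_of_nonneg hv0]
        simpa using half_le_self (mul_nonneg hv0 (sq_nonneg ‖w‖))
    _ = 10 * (∫ ω, V ω ^ 2 ∂μ) * ‖w‖ ^ 2 := by ring

end CubicRemainder

section FejerKernel

/-- The Fejér kernel `2 (1 - cos x) / x²` on the line, written as the cosine transform of the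
triangle function so that its value at `0` needs no separate treatment. -/
def fejerKernel (x : ℝ) : ℝ := 2 * ∫ s in (0 : ℝ)..1, (1 - s) * Real.cos (x * s)

lemma continuous_fejerKernel : Continuous fejerKernel :=
  continuous_const.mul
    (intervalIntegral.continuous_parametric_intervalIntegral_of_continuous' (by fun_prop) 0 1)

lemma integral_one_sub : ∫ s in (0 : ℝ)..1, (1 - s) = 1 / 2 := by
  rw [intervalIntegral.integral_sub (by simp) (by simp)]
  norm_num

lemma fejerKernel_zero : fejerKernel 0 = 1 := by
  simp [fejerKernel, integral_one_sub]

lemma fejerKernel_eq_div {x : ℝ} (hx : x ≠ 0) : fejerKernel x = 2 * (1 - Real.cos x) / x ^ 2 := by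
  have hderiv : ∀ s ∈ Set.uIcc (0 : ℝ) 1,
      HasDerivAt (fun s => (1 - s) * Real.sin (x * s) / x - Real.cos (x * s) / x ^ 2)
        ((1 - s) * Real.cos (x * s)) s := fun s _ => by
    have hlin : HasDerivAt (fun s : ℝ => x * s) x s := by
      simpa using (hasDerivAt_id s).const_mul x
    refine ((((hasDerivAt_id s).const_sub 1).mul hlin.sin).div_const x |>.sub
      (hlin.cos.div_const (x ^ 2))).congr_deriv ?_
    simp only [id_eq]
    field_simp
    ring
  rw [fejerKernel, intervalIntegral.integral_eq_sub_of_hasDerivAt hderiv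
    (Continuous.intervalIntegrable (by fun_prop) _ _)]
  simp
  ring

lemma fejerKernel_nonneg (x : ℝ) : 0 ≤ fejerKernel x := by
  rcases eq_or_ne x 0 with rfl | hx
  · simp [fejerKernel_zero]
  · rw [fejerKernel_eq_div hx]
    have := Real.cos_le_one x
    have : 0 ≤ 1 - Real.cos x := by linarith
    positivity

lemma fejerKernel_le_one (x : ℝ) : fejerKernel x ≤ 1 := by
  rcases eq_or_ne x 0 with rfl | hx
  · simp [fejerKernel_zero]
  · rw [fejerKernel_eq_div hx, div_le_one (by positivity)]
    linarith [Real.one_sub_sq_div_two_le_cos (x := x)]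

lemma fejerKernel_mul_sq_le (x : ℝ) : fejerKernel x * x ^ 2 ≤ 4 := by
  rcases eq_or_ne x 0 with rfl | hx
  · simp
  · rw [fejerKernel_eq_div hx, div_mul_cancel₀ _ (by positivity)]
    linarith [Real.neg_one_le_cos x]

lemma integrable_fejerKernel : Integrable fejerKernel := by
  refine (integrable_inv_one_add_sq.const_mul 5).mono'
    continuous_fejerKernel.aestronglyMeasurable (Eventually.of_forall fun x => ?_)
  rw [Real.norm_of_nonneg (fejerKernel_nonneg x), ← div_eq_mul_inv, le_div_iff₀ (by positivity)]
  linarith [fejerKernel_le_one x, fejerKernel_mul_sq_le x]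

lemma integral_fejerKernel_pos : 0 < ∫ x, fejerKernel x := by
  rw [integral_pos_iff_support_of_nonneg fejerKernel_nonneg integrable_fejerKernel]
  refine IsOpen.measure_pos volume continuous_fejerKernel.isOpen_support ⟨0, ?_⟩
  simp [fejerKernel_zero]

lemma exists_lt_two_mul_integral_fejerKernel :
    ∃ a : ℝ, 0 < a ∧ ∫ x, fejerKernel x < 2 * ∫ x in Set.Icc (-a) a, fejerKernel x := by
  have hlim : Tendsto (fun a : ℝ => ∫ x in (-a)..a, fejerKernel x) atTop
      (nhds (∫ x, fejerKernel x)) :=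
    intervalIntegral_tendsto_integral integrable_fejerKernel tendsto_neg_atTop_atBot tendsto_id
  obtain ⟨a, ha, ha0⟩ := ((hlim.eventually_const_lt (half_lt_self integral_fejerKernel_pos)).and
    (eventually_gt_atTop 0)).exists
  refine ⟨a, ha0, ?_⟩
  rw [integral_Icc_eq_integral_Ioc, ← intervalIntegral.integral_of_le (by linarith)]
  linarith

variable {g : ℝ → ℝ}

lemma norm_integral_cos_mul_le (hg : Integrable g) (ξ t : ℝ) :
    |∫ u, Real.cos (ξ * (u - t)) * g u| ≤ ‖∫ u : ℝ, Complex.exp (ξ * u * Complex.I) * g u‖ := by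
  have hint : Integrable fun u : ℝ => Complex.exp (ξ * (u - t) * Complex.I) * g u :=
    hg.ofReal.bdd_mul (c := 1) (Continuous.aestronglyMeasurable (by fun_prop))
      (Eventually.of_forall fun u => le_of_eq (by
        simpa using Complex.norm_exp_ofReal_mul_I (ξ * (u - t))))
  have hre : ∫ u, Real.cos (ξ * (u - t)) * g u =
      (∫ u : ℝ, Complex.exp (ξ * (u - t) * Complex.I) * g u).re := by
    rw [← RCLike.re_eq_complex_re, ← integral_re hint]
    refine integral_congr_ae (Eventually.of_forall fun u => ?_)
    have : (ξ * (u - t) * Complex.I : ℂ) = ((ξ * (u - t) : ℝ) : ℂ) * Complex.I := by push_cast; rfl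
    simp only [RCLike.re_eq_complex_re, Complex.re_mul_ofReal]
    rw [this, Complex.exp_ofReal_mul_I_re]
  have hshift : ∫ u : ℝ, Complex.exp (ξ * (u - t) * Complex.I) * g u =
      Complex.exp ((-(ξ * t) : ℝ) * Complex.I) *
        ∫ u : ℝ, Complex.exp (ξ * u * Complex.I) * g u := by
    rw [← integral_const_mul]
    refine integral_congr_ae (Eventually.of_forall fun u => ?_)
    simp only [← mul_assoc, ← Complex.exp_add]
    congr 2
    push_cast
    ring
  rw [hre, hshift]
  refine (Complex.abs_re_le_norm _).trans ?_
  rw [norm_mul, Complex.norm_exp_ofReal_mul_I, one_mul]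

lemma integral_fejerKernel_mul (hg : Integrable g) (T t : ℝ) :
    ∫ u, fejerKernel (T * (u - t)) * g u =
      2 * ∫ s in (0 : ℝ)..1, (1 - s) * ∫ u, Real.cos (T * s * (u - t)) * g u := by
  have hint : Integrable (fun p : ℝ × ℝ => (1 - p.2) * (Real.cos (T * p.2 * (p.1 - t)) * g p.1))
      (volume.prod (volume.restrict (Set.Ioc (0 : ℝ) 1))) := by
    have hlin : IntegrableOn (fun s : ℝ => 1 - s) (Set.Ioc 0 1) :=
      (Continuous.integrableOn_Icc (by fun_prop)).mono_set Set.Ioc_subset_Icc_self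
    refine ((hg.mul_prod hlin).bdd_mul (c := 1)
      (f := fun p : ℝ × ℝ => Real.cos (T * p.2 * (p.1 - t)))
      (Continuous.aestronglyMeasurable (by fun_prop))
      (Eventually.of_forall fun p => Real.abs_cos_le_one _)).congr
      (Eventually.of_forall fun p => ?_)
    ring
  calc ∫ u, fejerKernel (T * (u - t)) * g u
      = 2 * ∫ u, ∫ s in Set.Ioc (0 : ℝ) 1, (1 - s) * (Real.cos (T * s * (u - t)) * g u) := by
        rw [← integral_const_mul]
        refine integral_congr_ae (Eventually.of_forall fun u => ?_)
        simp only [fejerKernel, intervalIntegral.integral_of_le zero_le_one, ← mul_assoc,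
          integral_mul_const]
        simp only [mul_right_comm T]
    _ = 2 * ∫ s in Set.Ioc (0 : ℝ) 1, ∫ u, (1 - s) * (Real.cos (T * s * (u - t)) * g u) := by
        rw [integral_integral_swap hint]
    _ = _ := by
        simp_rw [integral_const_mul, intervalIntegral.integral_of_le zero_le_one]

end FejerKernel

section EsseenSmoothing

variable {g : ℝ → ℝ} {T L M a b : ℝ}

lemma continuous_integral_cexp_mul_I (hg : Integrable g) :
    Continuous fun ξ : ℝ => ∫ u : ℝ, Complex.exp (ξ * u * Complex.I) * g u := by
  refine continuous_of_dominated (bound := fun u => ‖g u‖) (fun ξ => ?_)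
    (fun ξ => Eventually.of_forall fun u => ?_) hg.norm (Eventually.of_forall fun u => by fun_prop)
  · exact (Continuous.aestronglyMeasurable (by fun_prop)).mul hg.ofReal.1
  · rw [norm_mul, ← Complex.ofReal_mul, Complex.norm_exp_ofReal_mul_I, one_mul, Complex.norm_real]

lemma mul_abs_integral_fejerKernel_mul_le (hg : Integrable g) (hT : 0 ≤ T) (t : ℝ) :
    T * |∫ u, fejerKernel (T * (u - t)) * g u| ≤
      2 * ∫ ξ in (0 : ℝ)..T, ‖∫ u : ℝ, Complex.exp (ξ * u * Complex.I) * g u‖ := by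
  set φ : ℝ → ℝ := fun ξ => ‖∫ u : ℝ, Complex.exp (ξ * u * Complex.I) * g u‖
  have hφ : Continuous fun s => φ (T * s) :=
    (continuous_integral_cexp_mul_I hg).norm.comp (continuous_const_mul T)
  have hbound : ‖∫ s in (0 : ℝ)..1, (1 - s) * ∫ u, Real.cos (T * s * (u - t)) * g u‖ ≤
      ∫ s in (0 : ℝ)..1, φ (T * s) := by
    refine intervalIntegral.norm_integral_le_of_norm_le zero_le_one
      (Eventually.of_forall fun s hs => ?_) (hφ.intervalIntegrable (μ := volume) 0 1)
    rw [norm_mul, Real.norm_of_nonneg (sub_nonneg.2 hs.2), Real.norm_eq_abs]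
    exact (mul_le_of_le_one_left (abs_nonneg _) (by linarith [hs.1])).trans
      (norm_integral_cos_mul_le hg (T * s) t)
  calc T * |∫ u, fejerKernel (T * (u - t)) * g u|
      = 2 * (T * |∫ s in (0 : ℝ)..1, (1 - s) * ∫ u, Real.cos (T * s * (u - t)) * g u|) := by
        rw [integral_fejerKernel_mul hg, abs_mul, abs_two]
        ring
    _ ≤ 2 * (T * ∫ s in (0 : ℝ)..1, φ (T * s)) := by
        rw [← Real.norm_eq_abs]
        gcongr
    _ = 2 * ∫ ξ in (0 : ℝ)..T, φ ξ := by
        rw [intervalIntegral.mul_integral_comp_mul_left, mul_zero, mul_one]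

lemma le_mul_integral_fejerKernel_mul (hg : Integrable g) (hT : 0 < T) (hM : ∀ u, |g u| ≤ M)
    {t : ℝ} (hb : ∀ u, |T * (u - t)| ≤ a → b ≤ g u) :
    (b + M) * (∫ x in Set.Icc (-a) a, fejerKernel x) - M * ∫ x, fejerKernel x ≤
      T * ∫ u, fejerKernel (T * (u - t)) * g u := by
  set G : ℝ → ℝ := fun x => (b + M) * (Set.Icc (-a) a).indicator fejerKernel x - M * fejerKernel x
  have hind : Integrable fun x => (b + M) * (Set.Icc (-a) a).indicator fejerKernel x :=
    (integrable_fejerKernel.indicator measurableSet_Icc).const_mul _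
  have hG : Integrable G := hind.sub (integrable_fejerKernel.const_mul M)
  have hle : ∀ u, G (T * (u - t)) ≤ fejerKernel (T * (u - t)) * g u := by
    intro u
    have hK := fejerKernel_nonneg (T * (u - t))
    have hgM := neg_le_of_abs_le (hM u)
    by_cases hu : |T * (u - t)| ≤ a
    · simp only [G, Set.indicator_of_mem (Set.mem_Icc.2 (abs_le.1 hu))]
      nlinarith [hb u hu]
    · simp only [G, Set.indicator_of_notMem fun h => hu (abs_le.2 (Set.mem_Icc.1 h))]
      nlinarith
  calc (b + M) * (∫ x in Set.Icc (-a) a, fejerKernel x) - M * ∫ x, fejerKernel x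
      = ∫ x, G x := by
        rw [integral_sub hind (integrable_fejerKernel.const_mul M), integral_const_mul,
          integral_const_mul, integral_indicator measurableSet_Icc]
    _ = T * ∫ u, G (T * (u - t)) := by
        rw [integral_sub_right_eq_self (fun u => G (T * u)), Measure.integral_comp_mul_left,
          abs_of_pos (inv_pos.2 hT), smul_eq_mul, mul_inv_cancel_left₀ hT.ne']
    _ ≤ T * ∫ u, fejerKernel (T * (u - t)) * g u := by
        refine mul_le_mul_of_nonneg_left (integral_mono ?_ ?_ hle) hT.le
        · exact (hG.comp_mul_left' hT.ne').comp_sub_right t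
        · refine hg.bdd_mul (c := 1) (Continuous.aestronglyMeasurable ?_)
            (Eventually.of_forall fun u => ?_)
          · exact continuous_fejerKernel.comp (by fun_prop)
          · rw [Real.norm_of_nonneg (fejerKernel_nonneg _)]
            exact fejerKernel_le_one _

lemma abs_add_mul_integral_fejerKernel_le (hg : Integrable g) (hT : 0 < T) (hL : 0 ≤ L)
    (hM : ∀ u, |g u| ≤ M) (hgL : ∀ u v, u ≤ v → g v - g u ≤ L * (v - u)) (t : ℝ) :
    (|g t| - 2 * a * L / T + M) * (∫ x in Set.Icc (-a) a, fejerKernel x) -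
        M * ∫ x, fejerKernel x ≤
      2 * ∫ ξ in (0 : ℝ)..T, ‖∫ u : ℝ, Complex.exp (ξ * u * Complex.I) * g u‖ := by
  have hshift : ∀ u s : ℝ, |T * (u - s)| ≤ a → |u - s| ≤ a / T := fun u s h => by
    rwa [abs_mul, abs_of_pos hT, ← le_div_iff₀' hT] at h
  have hdrop : ∀ d, d ≤ 2 * (a / T) → L * d ≤ 2 * a * L / T := fun d hd =>
    (mul_le_mul_of_nonneg_left hd hL).trans_eq (by ring)
  rcases le_total 0 (g t) with ht | ht
  · rw [abs_of_nonneg ht]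
    refine (le_mul_integral_fejerKernel_mul (t := t - a / T) hg hT hM fun u hu => ?_).trans
      (le_trans ?_ (mul_abs_integral_fejerKernel_mul_le hg hT.le (t - a / T)))
    · have hu' := abs_le.1 (hshift u _ hu)
      linarith [hgL u t (by linarith), hdrop (t - u) (by linarith)]
    · gcongr
      exact le_abs_self _
  · rw [abs_of_nonpos ht]
    refine (le_mul_integral_fejerKernel_mul (t := t + a / T) hg.neg hT
      (fun u => by simpa using hM u) fun u hu => ?_).trans
      (le_trans ?_ (mul_abs_integral_fejerKernel_mul_le hg hT.le (t + a / T)))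
    · have hu' := abs_le.1 (hshift u _ hu)
      simp only [Pi.neg_apply]
      linarith [hgL t u (by linarith), hdrop (u - t) (by linarith)]
    · simp only [Pi.neg_apply, mul_neg, integral_neg]
      rw [← mul_neg]
      gcongr
      exact neg_le_abs _

-- At a near-maximum of `|g|` the one-sided Lipschitz bound keeps `g` large on a window of width
-- `2a/T` on one side, and the Fejér average over that window only sees frequencies up to `T`.
theorem exists_esseen_smoothing_const : ∃ C > 0, ∀ {g : ℝ → ℝ} {T L M : ℝ},
    Integrable g → 0 < T → 0 ≤ L → (∀ u, |g u| ≤ M) →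
    (∀ u v, u ≤ v → g v - g u ≤ L * (v - u)) → ∀ t, |g t| ≤
      C * ((∫ ξ in (0 : ℝ)..T, ‖∫ u : ℝ, Complex.exp (ξ * u * Complex.I) * g u‖) + L / T) := by
  obtain ⟨a, ha, hκ⟩ := exists_lt_two_mul_integral_fejerKernel
  set κ := ∫ x, fejerKernel x
  set κa := ∫ x in Set.Icc (-a) a, fejerKernel x
  have hκa : 0 < κa := by linarith [integral_fejerKernel_pos]
  have hgap : 0 < 2 * κa - κ := by linarith
  refine ⟨(2 + 2 * a * κa) / (2 * κa - κ), by positivity, fun {g T L M} hg hT hL hM hgL t => ?_⟩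
  set J := ∫ ξ in (0 : ℝ)..T, ‖∫ u : ℝ, Complex.exp (ξ * u * Complex.I) * g u‖
  have hJ : 0 ≤ J := intervalIntegral.integral_nonneg hT.le fun _ _ => norm_nonneg _
  set N := ⨆ u, |g u|
  have hN : ∀ u, |g u| ≤ N := le_ciSup ⟨M, Set.forall_mem_range.2 hM⟩
  have hsup : N ≤ (2 * J + N * κ) / κa + 2 * a * L / T - N := ciSup_le fun u => by
    have h := abs_add_mul_integral_fejerKernel_le (a := a) hg hT hL hN hgL u
    have : |g u| - 2 * a * L / T + N ≤ (2 * J + N * κ) / κa := by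
      rw [le_div_iff₀ hκa]
      linarith
    linarith
  refine (hN t).trans ?_
  rw [div_mul_eq_mul_div, le_div_iff₀ hgap]
  have hcancel : (2 * J + N * κ) / κa * κa = 2 * J + N * κ := div_mul_cancel₀ _ hκa.ne'
  have hscale : 0 ≤ L / T := by positivity
  have hmul := mul_le_mul_of_nonneg_right hsup hκa.le
  have hprod : 0 ≤ a * κa * J := by positivity
  rw [sub_mul, add_mul, hcancel, mul_div_assoc] at hmul
  linarith

end EsseenSmoothing

section TiltedTail

variable {P : Measure ℝ} {t u v : ℝ}

/-- The exponentially tilted tail `e^t P[t, ∞)`; a uniform bound on it is an exponential tail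
bound for `P`. -/
def tiltedTail (P : Measure ℝ) (t : ℝ) : ℝ := Real.exp t * P.real (Set.Ici t)

lemma tiltedTail_nonneg : 0 ≤ tiltedTail P t :=
  mul_nonneg (Real.exp_pos t).le measureReal_nonneg

lemma tiltedTail_le_mgf [IsFiniteMeasure P] (hP : Integrable (fun x => Real.exp (1 * x)) P) :
    tiltedTail P t ≤ mgf id P 1 := by
  have hchernoff : P.real {x | t ≤ x} ≤ Real.exp (-1 * t) * mgf id P 1 :=
    measure_ge_le_exp_mul_mgf t zero_le_one hP
  calc tiltedTail P t ≤ Real.exp t * (Real.exp (-1 * t) * mgf id P 1) :=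
        mul_le_mul_of_nonneg_left hchernoff (Real.exp_pos t).le
    _ = mgf id P 1 := by rw [← mul_assoc, ← Real.exp_add]; simp

lemma tiltedTail_sub_le [IsFiniteMeasure P] (huv : u ≤ v) :
    tiltedTail P v - tiltedTail P u ≤ tiltedTail P v * (v - u) := by
  have hexp : Real.exp v * (1 - (v - u)) ≤ Real.exp u :=
    (mul_le_mul_of_nonneg_left (Real.one_sub_le_exp_neg (v - u)) (Real.exp_pos v).le).trans_eq
      (by rw [← Real.exp_add]; ring_nf)
  have hmono : P.real (Set.Ici v) ≤ P.real (Set.Ici u) :=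
    measureReal_mono (Set.Ici_subset_Ici.2 huv)
  have htail : tiltedTail P v * (1 - (v - u)) ≤ tiltedTail P u :=
    calc tiltedTail P v * (1 - (v - u))
        = Real.exp v * (1 - (v - u)) * P.real (Set.Ici v) := by rw [tiltedTail]; ring
      _ ≤ Real.exp u * P.real (Set.Ici v) := by gcongr
      _ ≤ tiltedTail P u := mul_le_mul_of_nonneg_left hmono (Real.exp_pos u).le
  linarith

lemma integrable_indicator_cexp [IsFiniteMeasure P]
    (hP : Integrable (fun x => Real.exp (1 * x)) P) (ξ : ℝ) :
    Integrable ({p : ℝ × ℝ | p.1 ≤ p.2}.indicator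
      fun p => Complex.exp ((1 + ξ * Complex.I) * p.1)) (volume.prod P) := by
  have hmeas : MeasurableSet {p : ℝ × ℝ | p.1 ≤ p.2} :=
    measurableSet_le measurable_fst measurable_snd
  have hnorm : ∀ u x : ℝ, ‖({p : ℝ × ℝ | p.1 ≤ p.2}.indicator
      fun p => Complex.exp ((1 + ξ * Complex.I) * p.1)) (u, x)‖ =
        (Set.Iic x).indicator Real.exp u := fun u x => by
    rw [norm_indicator_eq_indicator_norm]
    simp [Set.indicator, Complex.norm_exp]
  rw [integrable_prod_iff' (Measurable.aestronglyMeasurable (Measurable.indicator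
    (by fun_prop) hmeas))]
  constructor
  · refine Eventually.of_forall fun x => ?_
    rw [← integrable_norm_iff]
    · simp_rw [hnorm]
      exact (integrableOn_exp_Iic x).integrable_indicator measurableSet_Iic
    · exact (Measurable.indicator (by fun_prop) hmeas).comp (by fun_prop)
        |>.aestronglyMeasurable
  · simp_rw [hnorm, integral_indicator measurableSet_Iic, integral_exp_Iic]
    simpa using hP

lemma integral_indicator_cexp_snd (ξ u : ℝ) :
    ∫ x, ({p : ℝ × ℝ | p.1 ≤ p.2}.indicator
      fun p => Complex.exp ((1 + ξ * Complex.I) * p.1)) (u, x) ∂P =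
        Complex.exp (ξ * u * Complex.I) * tiltedTail P u := by
  have hsection : (fun x => ({p : ℝ × ℝ | p.1 ≤ p.2}.indicator
      fun p => Complex.exp ((1 + ξ * Complex.I) * p.1)) (u, x)) =
        (Set.Ici u).indicator fun _ => Complex.exp ((1 + ξ * Complex.I) * u) := by
    ext x
    simp [Set.indicator]
  rw [hsection, integral_indicator_const _ measurableSet_Ici, tiltedTail, Complex.real_smul]
  push_cast
  rw [add_mul, Complex.exp_add]
  ring_nf

lemma integrable_cexp_mul_tiltedTail [IsFiniteMeasure P]
    (hP : Integrable (fun x => Real.exp (1 * x)) P) (ξ : ℝ) :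
    Integrable fun u : ℝ => Complex.exp (ξ * u * Complex.I) * tiltedTail P u := by
  simpa only [integral_indicator_cexp_snd] using (integrable_indicator_cexp hP ξ).integral_prod_left

lemma integrable_tiltedTail [IsFiniteMeasure P]
    (hP : Integrable (fun x => Real.exp (1 * x)) P) : Integrable (tiltedTail P) := by
  simpa using (integrable_cexp_mul_tiltedTail hP 0).re

lemma integral_cexp_mul_tiltedTail [IsFiniteMeasure P]
    (hP : Integrable (fun x => Real.exp (1 * x)) P) (ξ : ℝ) :
    ∫ u : ℝ, Complex.exp (ξ * u * Complex.I) * tiltedTail P u =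
      complexMGF id P (1 + ξ * Complex.I) / (1 + ξ * Complex.I) := by
  have hsection : ∀ x, ∫ u, ({p : ℝ × ℝ | p.1 ≤ p.2}.indicator
      fun p => Complex.exp ((1 + ξ * Complex.I) * p.1)) (u, x) =
        Complex.exp ((1 + ξ * Complex.I) * x) / (1 + ξ * Complex.I) := fun x => by
    rw [← integral_exp_mul_complex_Iic (by simp), ← integral_indicator measurableSet_Iic]
    rfl
  simp_rw [← integral_indicator_cexp_snd]
  rw [← integral_prod _ (integrable_indicator_cexp hP ξ),
    integral_prod_symm _ (integrable_indicator_cexp hP ξ)]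
  simp_rw [hsection]
  exact integral_div _ _

end TiltedTail

section NearGaussian

variable {P : Measure ℝ} {S ξ t u v : ℝ}

/-- `P` has all exponential moments and, on the disc of radius `S`, the complex moment generating
function `e^{z²/2 + O(|z|³/S)}`. For a centred normalised sum, `S` is of the order of the standard
deviation before normalisation. -/
structure HasNearGaussianMGF (P : Measure ℝ) (S : ℝ) : Prop where
  integrable_exp_mul : ∀ a : ℝ, Integrable (fun x => Real.exp (a * x)) P
  exists_remainder : ∀ z : ℂ, ‖z‖ < S →
    ∃ r : ℂ, complexMGF id P z = Complex.exp (z ^ 2 / 2 + r) ∧ ‖r‖ ≤ ‖z‖ ^ 3 / S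

lemma hasNearGaussianMGF_gaussianReal (hS : 0 ≤ S) : HasNearGaussianMGF (gaussianReal 0 1) S where
  integrable_exp_mul := integrable_exp_mul_gaussianReal
  exists_remainder z _ := ⟨0, by simp [complexMGF_id_gaussianReal], by rw [norm_zero]; positivity⟩

lemma HasNearGaussianMGF.map_neg (h : HasNearGaussianMGF P S) :
    HasNearGaussianMGF (P.map fun x => -x) S where
  integrable_exp_mul a := by
    rw [integrable_map_measure (by fun_prop) (by fun_prop)]
    simpa [Function.comp_def] using h.integrable_exp_mul (-a)
  exists_remainder z hz := by
    obtain ⟨r, hr, hnorm⟩ := h.exists_remainder (-z) (by rwa [norm_neg])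
    refine ⟨r, ?_, by rwa [norm_neg] at hnorm⟩
    rw [complexMGF_id_map (by fun_prop), ← neg_sq, ← hr]
    simp [complexMGF]

lemma norm_one_add_mul_I_sq (ξ : ℝ) : ‖(1 + ξ * Complex.I : ℂ)‖ ^ 2 = 1 + ξ ^ 2 := by
  rw [← Complex.normSq_eq_norm_sq, Complex.normSq_apply]
  simp
  ring

lemma one_le_norm_one_add_mul_I (ξ : ℝ) : 1 ≤ ‖(1 + ξ * Complex.I : ℂ)‖ := by
  simpa using Complex.re_le_norm (1 + ξ * Complex.I)

lemma re_one_add_mul_I_sq_div_two (ξ : ℝ) :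
    ((1 + ξ * Complex.I) ^ 2 / 2 : ℂ).re = (1 - ξ ^ 2) / 2 := by
  simp [sq, Complex.add_re]

lemma HasNearGaussianMGF.exists_remainder_one_add_mul_I (h : HasNearGaussianMGF P S)
    (hS : 16 ≤ S) (hξ : |ξ| ≤ S / 16) :
    ∃ r : ℂ, complexMGF id P (1 + ξ * Complex.I) =
      Complex.exp ((1 + ξ * Complex.I) ^ 2 / 2 + r) ∧
        ‖r‖ ≤ (1 + ξ ^ 2) / 8 ∧ ‖r‖ ≤ (1 + ξ ^ 2) ^ 2 / S := by
  have hle : ‖(1 + ξ * Complex.I : ℂ)‖ ≤ 1 + |ξ| := (norm_add_le _ _).trans (by simp)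
  have hone := one_le_norm_one_add_mul_I ξ
  obtain ⟨r, hr, hnorm⟩ := h.exists_remainder (1 + ξ * Complex.I) (by linarith)
  rw [← norm_one_add_mul_I_sq]
  refine ⟨r, hr, hnorm.trans ?_, hnorm.trans ?_⟩
  · rw [div_le_iff₀ (by linarith), pow_succ, div_mul_eq_mul_div, mul_div_assoc]
    gcongr
    linarith
  · rw [← pow_mul]
    gcongr
    norm_num

lemma HasNearGaussianMGF.mgf_one_le_two (h : HasNearGaussianMGF P S) (hS : 16 ≤ S) :
    mgf id P 1 ≤ 2 := by
  obtain ⟨r, hr, hr_le, -⟩ := h.exists_remainder_one_add_mul_I (ξ := 0) hS (by simp; linarith)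
  have hre := (Complex.re_le_norm r).trans hr_le
  have hmgf : (mgf id P 1 : ℝ) = ‖Complex.exp (1 / 2 + r)‖ := by
    have := complexMGF_ofReal (X := id) (μ := P) 1
    simp only [Complex.ofReal_zero, zero_mul, add_zero, one_pow, Complex.ofReal_one] at hr this
    rw [← hr, this, Complex.norm_of_nonneg mgf_nonneg]
  rw [hmgf, Complex.norm_exp, ← Real.exp_log (zero_lt_two (α := ℝ)), Real.exp_le_exp]
  norm_num at hre ⊢
  linarith [Real.log_two_gt_d9]

lemma HasNearGaussianMGF.norm_complexMGF_sub_le (h : HasNearGaussianMGF P S) (hS : 16 ≤ S)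
    (hξ : |ξ| ≤ S / 16) :
    ‖complexMGF id P (1 + ξ * Complex.I) - complexMGF id (gaussianReal 0 1) (1 + ξ * Complex.I)‖ ≤
      512 / S * Real.exp (-(1 / 4) * ξ ^ 2) := by
  have : 0 < S := by linarith
  obtain ⟨r, hr, hr_le, hr_le'⟩ := h.exists_remainder_one_add_mul_I hS hξ
  set E := Real.exp ((1 + ξ ^ 2) / 8)
  have hexp_sub : ‖Complex.exp r - 1‖ ≤ ‖r‖ * Real.exp ‖r‖ := by
    simpa using Complex.norm_exp_sub_sum_le_norm_mul_exp r 1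
  have hquad : (1 + ξ ^ 2) ^ 2 ≤ 128 * E := by
    have := Real.quadratic_le_exp_of_nonneg (x := (1 + ξ ^ 2) / 8) (by positivity)
    nlinarith [sq_nonneg ξ]
  have hgauss : Real.exp ((1 - ξ ^ 2) / 2) * (E * E) ≤ 4 * Real.exp (-(1 / 4) * ξ ^ 2) :=
    calc Real.exp ((1 - ξ ^ 2) / 2) * (E * E)
        = Real.exp (3 / 4) * Real.exp (-(1 / 4) * ξ ^ 2) := by
          simp only [E, ← Real.exp_add]
          ring_nf
      _ ≤ Real.exp 1 * Real.exp (-(1 / 4) * ξ ^ 2) := by gcongr; norm_num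
      _ ≤ 4 * Real.exp (-(1 / 4) * ξ ^ 2) := by
          gcongr
          linarith [Real.exp_one_lt_d9]
  calc ‖complexMGF id P (1 + ξ * Complex.I) -
        complexMGF id (gaussianReal 0 1) (1 + ξ * Complex.I)‖
      = Real.exp ((1 - ξ ^ 2) / 2) * ‖Complex.exp r - 1‖ := by
        rw [hr, complexMGF_id_gaussianReal, Complex.exp_add, ← re_one_add_mul_I_sq_div_two,
          ← Complex.norm_exp, ← norm_mul, mul_sub, mul_one]
        simp
    _ ≤ Real.exp ((1 - ξ ^ 2) / 2) * (128 * E / S * E) := by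
        gcongr
        refine hexp_sub.trans (mul_le_mul ?_ (Real.exp_le_exp.2 hr_le) (by positivity)
          (by positivity))
        exact hr_le'.trans (by gcongr)
    _ = 128 / S * (Real.exp ((1 - ξ ^ 2) / 2) * (E * E)) := by ring
    _ ≤ 128 / S * (4 * Real.exp (-(1 / 4) * ξ ^ 2)) := by gcongr
    _ = 512 / S * Real.exp (-(1 / 4) * ξ ^ 2) := by ring

lemma exp_mul_gaussianPDFReal_le_two (t : ℝ) : Real.exp t * gaussianPDFReal 0 1 t ≤ 2 := by
  have hsqrt : 1 ≤ √(2 * Real.pi * (1 : ℝ≥0)) :=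
    Real.one_le_sqrt.2 (by push_cast; linarith [Real.pi_gt_three])
  have hexp : Real.exp (t + -(t - 0) ^ 2 / (2 * (1 : ℝ≥0))) ≤ 2 := by
    refine (Real.exp_le_exp.2 ?_).trans_eq (Real.exp_log zero_lt_two)
    push_cast
    nlinarith [Real.log_two_gt_d9, sq_nonneg (t - 1)]
  calc Real.exp t * gaussianPDFReal 0 1 t
      = (√(2 * Real.pi * (1 : ℝ≥0)))⁻¹ * Real.exp (t + -(t - 0) ^ 2 / (2 * (1 : ℝ≥0))) := by
        rw [gaussianPDFReal, Real.exp_add]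
        ring
    _ ≤ 1 * 2 := mul_le_mul (inv_le_one_of_one_le₀ hsqrt) hexp (Real.exp_pos _).le zero_le_one
    _ = 2 := one_mul 2

lemma tiltedTail_gaussianReal_sub_le (huv : u ≤ v) :
    tiltedTail (gaussianReal 0 1) u - tiltedTail (gaussianReal 0 1) v ≤ 2 * (v - u) := by
  have hsplit : (gaussianReal 0 1).real (Set.Ici u) =
      (gaussianReal 0 1).real (Set.Ico u v) + (gaussianReal 0 1).real (Set.Ici v) := by
    rw [← Set.Ico_union_Ici_eq_Ici huv, measureReal_union _ measurableSet_Ici]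
    exact Set.disjoint_left.2 fun x hx hx' => hx.2.not_ge hx'
  have hdensity : Real.exp u * (gaussianReal 0 1).real (Set.Ico u v) ≤ 2 * (v - u) := by
    rw [measureReal_def, gaussianReal_apply_eq_integral _ one_ne_zero, ENNReal.toReal_ofReal
      (integral_nonneg fun _ => gaussianPDFReal_nonneg _ _ _), ← integral_const_mul]
    refine (setIntegral_mono_on (g := fun _ => 2)
      ((integrable_gaussianPDFReal 0 1).const_mul _).integrableOn (by simp)
      measurableSet_Ico fun x hx => ?_).trans_eq ?_
    · refine le_trans ?_ (exp_mul_gaussianPDFReal_le_two x)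
      gcongr
      · exact gaussianPDFReal_nonneg _ _ _
      · exact hx.1
    · simp [huv, mul_comm]
  have hmono : Real.exp u * (gaussianReal 0 1).real (Set.Ici v) ≤
      tiltedTail (gaussianReal 0 1) v := by
    rw [tiltedTail]
    gcongr
  rw [tiltedTail, hsplit, mul_add]
  linarith

lemma HasNearGaussianMGF.norm_integral_cexp_mul_tiltedTail_sub_le [IsFiniteMeasure P]
    (h : HasNearGaussianMGF P S) (hS : 16 ≤ S) (hξ : |ξ| ≤ S / 16) :
    ‖∫ u : ℝ, Complex.exp (ξ * u * Complex.I) *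
        ((tiltedTail P u - tiltedTail (gaussianReal 0 1) u : ℝ) : ℂ)‖ ≤
      512 / S * Real.exp (-(1 / 4) * ξ ^ 2) := by
  have hP := h.integrable_exp_mul 1
  have hG := integrable_exp_mul_gaussianReal (μ := 0) (v := 1) 1
  simp only [Complex.ofReal_sub, mul_sub]
  rw [integral_sub (integrable_cexp_mul_tiltedTail hP ξ) (integrable_cexp_mul_tiltedTail hG ξ),
    integral_cexp_mul_tiltedTail hP, integral_cexp_mul_tiltedTail hG, ← sub_div, norm_div]
  exact (div_le_self (norm_nonneg _) (one_le_norm_one_add_mul_I ξ)).trans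
    (h.norm_complexMGF_sub_le hS hξ)

theorem exists_abs_tiltedTail_sub_le : ∃ K > 0, ∀ {P : Measure ℝ} {S : ℝ} [IsFiniteMeasure P],
    HasNearGaussianMGF P S → 16 ≤ S →
      ∀ t, |tiltedTail P t - tiltedTail (gaussianReal 0 1) t| ≤ K / S := by
  obtain ⟨C, hC, hsmooth⟩ := exists_esseen_smoothing_const
  have hgauss : Integrable fun ξ : ℝ => Real.exp (-(1 / 4) * ξ ^ 2) :=
    integrable_exp_neg_mul_sq (by norm_num)
  set J := ∫ ξ : ℝ, Real.exp (-(1 / 4) * ξ ^ 2)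
  have : 0 ≤ J := integral_nonneg fun _ => (Real.exp_pos _).le
  refine ⟨C * (512 * J + 64), by positivity, fun {P S} _ h hS t => ?_⟩
  have hS0 : 0 < S := by linarith
  have hle_two : ∀ {Q : Measure ℝ} [IsFiniteMeasure Q], HasNearGaussianMGF Q S →
      ∀ u, tiltedTail Q u ≤ 2 := fun hQ u =>
    (tiltedTail_le_mgf (hQ.integrable_exp_mul 1)).trans (hQ.mgf_one_le_two hS)
  have hG := hasNearGaussianMGF_gaussianReal hS0.le
  have hfourier : ∫ ξ in (0 : ℝ)..(S / 16), ‖∫ u : ℝ, Complex.exp (ξ * u * Complex.I) *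
      ((tiltedTail P u - tiltedTail (gaussianReal 0 1) u : ℝ) : ℂ)‖ ≤ 512 / S * J := by
    rw [intervalIntegral.integral_of_le (by positivity), ← integral_const_mul]
    refine (integral_mono_of_nonneg (Eventually.of_forall fun _ => norm_nonneg _)
      (hgauss.const_mul (512 / S)).restrict ((ae_restrict_iff' measurableSet_Ioc).2 <|
        Eventually.of_forall fun ξ hξ => h.norm_integral_cexp_mul_tiltedTail_sub_le hS
          (by rw [abs_of_pos hξ.1]; exact hξ.2))).trans ?_
    exact setIntegral_le_integral (hgauss.const_mul _) (Eventually.of_forall fun _ => by positivity)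
  refine (hsmooth (T := S / 16) (L := 4) (M := 2)
    ((integrable_tiltedTail (h.integrable_exp_mul 1)).sub
      (integrable_tiltedTail (hG.integrable_exp_mul 1))) (by positivity) (by norm_num)
    (fun u => ?_) (fun u v huv => ?_) t).trans ?_
  · simp only [Pi.sub_apply]
    rw [abs_le]
    constructor <;> linarith [tiltedTail_nonneg (P := P) (t := u), hle_two h u, hle_two hG u,
      tiltedTail_nonneg (P := gaussianReal 0 1) (t := u)]
  · simp only [Pi.sub_apply]
    linarith [tiltedTail_sub_le (P := P) huv, tiltedTail_gaussianReal_sub_le huv,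
      mul_le_mul_of_nonneg_right (hle_two h v) (sub_nonneg.2 huv)]
  · calc _ ≤ C * (512 / S * J + 4 / (S / 16)) := by gcongr; exact hfourier
      _ = C * (512 * J + 64) / S := by field_simp; ring

theorem exists_abs_measureReal_Ici_sub_le : ∃ K > 0, ∀ {P : Measure ℝ} {S : ℝ}
    [IsFiniteMeasure P], HasNearGaussianMGF P S → 16 ≤ S →
      ∀ t, |P.real (Set.Ici t) - (gaussianReal 0 1).real (Set.Ici t)| ≤ K / S * Real.exp (-t) := by
  obtain ⟨K, hK, h⟩ := exists_abs_tiltedTail_sub_le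
  refine ⟨K, hK, fun {P S} _ hP hS t => ?_⟩
  have ht := h hP hS t
  rw [tiltedTail, tiltedTail, ← mul_sub, abs_mul, Real.abs_exp] at ht
  rwa [Real.exp_neg, ← div_eq_mul_inv, le_div_iff₀' (Real.exp_pos t)]

lemma cdf_gaussianReal_neg (t : ℝ) :
    cdf (gaussianReal 0 1) (-t) = (gaussianReal 0 1).real (Set.Ici t) := by
  conv_lhs => rw [← neg_zero, ← gaussianReal_map_neg, cdf_eq_real,
    map_measureReal_apply measurable_neg measurableSet_Iic]
  congr 1
  ext x
  simp

lemma cdf_gaussianReal_eq_one_sub (t : ℝ) :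
    cdf (gaussianReal 0 1) t = 1 - (gaussianReal 0 1).real (Set.Ici t) := by
  have := nullSingletonClass_gaussianReal (μ := 0) one_ne_zero
  rw [cdf_eq_real, ← probReal_compl_eq_one_sub measurableSet_Ici, Set.compl_Ici]
  exact measureReal_congr Iio_ae_eq_Iic.symm

theorem exists_abs_cdf_sub_le : ∃ K > 0, ∀ {P : Measure ℝ} {S : ℝ} [IsProbabilityMeasure P],
    HasNearGaussianMGF P S → 16 ≤ S →
      ∀ t, |cdf P t - cdf (gaussianReal 0 1) t| ≤ K / S * Real.exp (-|t|) := by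
  obtain ⟨K, hK, h⟩ := exists_abs_measureReal_Ici_sub_le
  refine ⟨K, hK, fun {P S} _ hP hS t => ?_⟩
  rcases le_total 0 t with ht | ht
  · rw [abs_of_nonneg ht, abs_sub_le_iff]
    constructor
    · -- `P` may have an atom at `t`, so the bound is obtained from the right of `t`
      have hright : ∀ s > t, cdf P t ≤ cdf (gaussianReal 0 1) s + K / S * Real.exp (-s) :=
        fun s hs => by
          have hIio : P.real (Set.Iic t) ≤ P.real (Set.Ici s)ᶜ :=
            measureReal_mono fun x hx => not_le.2 (lt_of_le_of_lt hx hs)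
          rw [probReal_compl_eq_one_sub measurableSet_Ici, ← cdf_eq_real] at hIio
          rw [cdf_gaussianReal_eq_one_sub]
          linarith [(abs_sub_le_iff.1 (h hP hS s)).2]
      have hlim : Tendsto (fun s => cdf (gaussianReal 0 1) s + K / S * Real.exp (-s))
          (nhdsWithin t (Set.Ioi t))
          (nhds (cdf (gaussianReal 0 1) t + K / S * Real.exp (-t))) :=
        (((cdf _).right_continuous t).mono Set.Ioi_subset_Ici_self).add
          (Continuous.continuousWithinAt (by fun_prop))
      linarith [ge_of_tendsto hlim (eventually_nhdsWithin_of_forall hright)]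
    · have hIci : P.real (Set.Ici t)ᶜ ≤ P.real (Set.Iic t) :=
        measureReal_mono (Set.compl_Ici.trans_subset Set.Iio_subset_Iic_self)
      rw [probReal_compl_eq_one_sub measurableSet_Ici, ← cdf_eq_real] at hIci
      rw [cdf_gaussianReal_eq_one_sub]
      linarith [(abs_sub_le_iff.1 (h hP hS t)).1]
  · have hreflect : cdf P t = (P.map fun x => -x).real (Set.Ici (-t)) := by
      rw [map_measureReal_apply measurable_neg measurableSet_Ici, cdf_eq_real]
      congr 1
      ext x
      simp
    have := Measure.isProbabilityMeasure_map (μ := P) (f := fun x => -x) (by fun_prop)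
    have hneg := h hP.map_neg hS (-t)
    rw [abs_of_nonpos ht, neg_neg]
    rwa [← hreflect, ← cdf_gaussianReal_neg, neg_neg] at hneg

end NearGaussian

section Minorization

variable {A : Type*} [MeasurableSpace A] {ν ρ : Measure A} {g : A → ℂ} {c : ℂ} {r γ : ℝ}

lemma exists_bounded_factor {O : Type*} {m0 : MeasurableSpace O} {μ : Measure O} {Y : O → A}
    {V : O → ℂ} (hr : 0 ≤ r) (hV : AEStronglyMeasurable[MeasurableSpace.comap Y inferInstance] V μ)
    (h : ∀ᵐ ω ∂μ, ‖V ω - c‖ ≤ r) :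
    ∃ g : A → ℂ, StronglyMeasurable g ∧ (∀ x, ‖g x - c‖ ≤ r) ∧ V =ᵐ[μ] fun ω => g (Y ω) := by
  classical
  obtain ⟨V', hV', hVV'⟩ := hV
  obtain ⟨g, hg, rfl⟩ := hV'.exists_eq_measurable_comp
  refine ⟨fun x => if ‖g x - c‖ ≤ r then g x else c,
    hg.ite (measurableSet_le (hg.measurable.sub_const c).norm measurable_const)
      stronglyMeasurable_const, fun x => ?_, ?_⟩
  · dsimp only
    split_ifs with hx
    · exact hx
    · simpa using hr
  · filter_upwards [hVV', h] with ω heq hle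
    rw [heq] at hle ⊢
    exact (if_pos hle).symm

lemma integral_bind_kernel {B E : Type*} [MeasurableSpace B]
    [NormedAddCommGroup E] [NormedSpace ℝ E] {ν : Measure A} {η : Kernel A B}
    {g : B → E} (hg : Integrable g (ν.bind η)) :
    ∫ y, g y ∂ν.bind η = ∫ x, ∫ y, g y ∂η x ∂ν := by
  rw [Measure.comp_eq_comp_const_apply] at hg ⊢
  rw [Kernel.integral_comp hg, Kernel.const_apply]

/-- The centre of the image of the ball of centre `c` under a kernel minorized by `γ • ν`. -/
def minorizedCentre (γ : ℝ) (ν : Measure A) (g : A → ℂ) (c : ℂ) :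
    ℂ := c + γ * ∫ y, (g y - c) ∂ν

variable [IsProbabilityMeasure ν]

lemma norm_minorizedCentre_sub_le (hγ : 0 ≤ γ) (hgr : ∀ x, ‖g x - c‖ ≤ r) :
    ‖minorizedCentre γ ν g c - c‖ ≤ γ * r := by
  have hint := norm_integral_le_of_norm_le_const (μ := ν) (Eventually.of_forall hgr)
  rw [probReal_univ, mul_one] at hint
  rw [minorizedCentre, add_sub_cancel_left, norm_mul, Complex.norm_real, Real.norm_of_nonneg hγ]
  gcongr

lemma norm_integral_sub_minorizedCentre_le [IsProbabilityMeasure ρ] (hγ : 0 ≤ γ)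
    (hle : ENNReal.ofReal γ • ν ≤ ρ) (hg : StronglyMeasurable g) (hgr : ∀ x, ‖g x - c‖ ≤ r) :
    ‖∫ y, g y ∂ρ - minorizedCentre γ ν g c‖ ≤ (1 - γ) * r := by
  have hgi : ∀ θ : Measure A, IsFiniteMeasure θ → Integrable g θ := fun _ _ =>
    .of_bound hg.aestronglyMeasurable (‖c‖ + r) (Eventually.of_forall fun x =>
      (norm_le_norm_add_norm_sub' _ _).trans (add_le_add_right (hgr x) _))
  have hint : ∀ θ : Measure A, IsFiniteMeasure θ → Integrable (fun y => g y - c) θ := fun θ hθ =>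
    (hgi θ hθ).sub (integrable_const c)
  have : IsFiniteMeasure (ENNReal.ofReal γ • ν) := ν.smul_finite ENNReal.ofReal_ne_top
  have hadd : ρ - ENNReal.ofReal γ • ν + ENNReal.ofReal γ • ν = ρ :=
    Measure.sub_add_cancel_of_le hle
  have hmass : (ρ - ENNReal.ofReal γ • ν).real Set.univ = 1 - γ := by
    have h : (ρ - ENNReal.ofReal γ • ν + ENNReal.ofReal γ • ν).real Set.univ = 1 := by
      rw [hadd, probReal_univ]
    rw [measureReal_add_apply, measureReal_ennreal_smul_apply, probReal_univ (μ := ν), mul_one,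
      ENNReal.toReal_ofReal hγ] at h
    exact eq_sub_of_add_eq h
  have hsplit : ∫ y, g y ∂ρ - minorizedCentre γ ν g c
      = ∫ y, (g y - c) ∂(ρ - ENNReal.ofReal γ • ν) := by
    have hρ : ∫ y, (g y - c) ∂ρ = ∫ y, g y ∂ρ - c := by
      simp [integral_sub (hgi ρ inferInstance) (integrable_const c)]
    have h := integral_add_measure (hint (ρ - ENNReal.ofReal γ • ν) inferInstance)
      (hint (ENNReal.ofReal γ • ν) inferInstance)
    rw [hadd, hρ, integral_smul_measure, ENNReal.toReal_ofReal hγ, Complex.real_smul] at h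
    rw [minorizedCentre]
    linear_combination h
  rw [hsplit, ← hmass, mul_comm]
  exact norm_integral_le_of_norm_le_const (Eventually.of_forall hgr)

lemma le_one_of_ofReal_smul_le [IsProbabilityMeasure ρ] (hle : ENNReal.ofReal γ • ν ≤ ρ) :
    γ ≤ 1 := by
  simpa using hle Set.univ

end Minorization

section MarkovChain

variable {O : Type*} {m0 : MeasurableSpace O} {𝒴 : ℕ → Type*} [∀ j, MeasurableSpace (𝒴 j)]
  {μ : Measure O} {X : ∀ j, O → 𝒴 j} {κ : ∀ j n, Kernel (𝒴 j) (𝒴 (j + n))} {n₀ : ℕ} {γ : ℝ}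
  {m : ∀ j, Measure (𝒴 j)}

/-- The σ-algebras generated by `X_0, …, X_{j-1}`; the shift against `pastSigma` makes the
σ-algebra at time `0` trivial. -/
def strictPast (hX : ∀ j, Measurable (X j)) : Filtration ℕ m0 where
  seq j := ⨆ i ∈ Finset.range j, MeasurableSpace.comap (X i) inferInstance
  mono' _ _ h := biSup_mono fun _ hi => Finset.range_mono h hi
  le' _ := iSup₂_le fun i _ => (hX i).comap_le

lemma strictPast_zero (hX : ∀ j, Measurable (X j)) : strictPast hX 0 = ⊥ := by
  simp [strictPast]

lemma comap_le_pastSigma (j : ℕ) : MeasurableSpace.comap (X j) inferInstance ≤ pastSigma X j :=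
  le_biSup (fun i => MeasurableSpace.comap (X i) inferInstance) (Finset.self_mem_range_succ j)

lemma pastSigma_le (hX : ∀ j, Measurable (X j)) (j : ℕ) : pastSigma X j ≤ m0 :=
  (strictPast hX).le (j + 1)

lemma map_restrict_eq_bind [IsFiniteMeasure μ] (hM : IsInhomMarkov μ X κ) (j n : ℕ) {s : Set O}
    (hs : MeasurableSet[pastSigma X j] s) :
    (μ.restrict s).map (X (j + n)) = ((μ.restrict s).map (X j)).bind (κ j n) := by
  have hle := pastSigma_le hM.meas j
  have := hM.isMarkovKernel j n
  ext Γ hΓ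
  have hκ : Measurable fun ω => κ j n (X j ω) Γ := ((κ j n).measurable_coe hΓ).comp (hM.meas j)
  have hfin : ∫⁻ ω in s, κ j n (X j ω) Γ ∂μ ≠ ∞ :=
    ne_top_of_le_ne_top (by simp) (lintegral_mono (g := 1) fun ω => prob_le_one)
  have hcond : μ[(X (j + n) ⁻¹' Γ).indicator fun _ => (1 : ℝ) | pastSigma X j] =ᵐ[μ]
      fun ω => (κ j n (X j ω) Γ).toReal := hM.cond j n Γ hΓ
  rw [Measure.bind_apply hΓ (Kernel.aemeasurable _),
    lintegral_map ((κ j n).measurable_coe hΓ) (hM.meas j),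
    Measure.map_apply (hM.meas _) hΓ, ← ENNReal.toReal_eq_toReal_iff' (measure_ne_top _ _) hfin,
    ← integral_toReal hκ.aemeasurable (Eventually.of_forall fun ω => measure_lt_top _ _),
    ← setIntegral_congr_ae (hle _ hs) (hcond.mono fun ω h _ => h),
    setIntegral_condExp hle ((integrable_const _).indicator (hM.meas _ hΓ)) hs,
    integral_indicator_const _ (hM.meas _ hΓ), smul_eq_mul, mul_one, Measure.real]

lemma integral_kernel_ae_eq_condExp [IsFiniteMeasure μ] (hM : IsInhomMarkov μ X κ) (j n : ℕ)
    {g : 𝒴 (j + n) → ℂ} (hg : StronglyMeasurable g) {B : ℝ} (hB : ∀ x, ‖g x‖ ≤ B) :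
    (fun ω => ∫ x, g x ∂κ j n (X j ω)) =ᵐ[μ] μ[fun ω => g (X (j + n) ω) | pastSigma X j] := by
  have hle := pastSigma_le hM.meas j
  have := hM.isMarkovKernel j n
  have hκg : StronglyMeasurable fun x => ∫ y, g y ∂κ j n x := hg.integral_kernel
  have hκB : ∀ x, ‖∫ y, g y ∂κ j n x‖ ≤ B := fun x =>
    (norm_integral_le_of_norm_le_const (Eventually.of_forall hB)).trans_eq (by simp)
  refine ae_eq_condExp_of_forall_setIntegral_eq hle
    (Integrable.of_bound (hg.comp_measurable (hM.meas _)).aestronglyMeasurable B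
      (Eventually.of_forall fun ω => hB _))
    (fun s _ _ => (Integrable.of_bound (hκg.comp_measurable (hM.meas _)).aestronglyMeasurable B
      (Eventually.of_forall fun ω => hκB _)).integrableOn) (fun s hs _ => ?_)
    ((hκg.comp_measurable (comap_measurable _)).mono (comap_le_pastSigma j)).aestronglyMeasurable
  have hbind := map_restrict_eq_bind hM j n hs
  have : IsFiniteMeasure (((μ.restrict s).map (X j)).bind (κ j n)) := hbind ▸ inferInstance
  calc ∫ ω in s, ∫ x, g x ∂κ j n (X j ω) ∂μ
      = ∫ x, ∫ y, g y ∂κ j n x ∂(μ.restrict s).map (X j) :=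
        (integral_map (hM.meas j).aemeasurable hκg.aestronglyMeasurable).symm
    _ = ∫ y, g y ∂((μ.restrict s).map (X j)).bind (κ j n) :=
        (integral_bind_kernel
          (Integrable.of_bound hg.aestronglyMeasurable B (Eventually.of_forall hB))).symm
    _ = ∫ ω in s, g (X (j + n) ω) ∂μ := by
        rw [← hbind, integral_map (hM.meas _).aemeasurable hg.aestronglyMeasurable]

lemma exists_condExp_eq_integral_kernel [IsFiniteMeasure μ] (hM : IsInhomMarkov μ X κ) (j n : ℕ)
    {V : O → ℂ} (hV : AEStronglyMeasurable[MeasurableSpace.comap (X (j + n)) inferInstance] V μ)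
    {c : ℂ} {r : ℝ} (hr : 0 ≤ r) (hVr : ∀ᵐ ω ∂μ, ‖V ω - c‖ ≤ r) :
    ∃ g : 𝒴 (j + n) → ℂ, StronglyMeasurable g ∧ (∀ x, ‖g x - c‖ ≤ r) ∧
      μ[V | pastSigma X j] =ᵐ[μ] fun ω => ∫ x, g x ∂κ j n (X j ω) := by
  obtain ⟨g, hg, hgr, hVg⟩ := exists_bounded_factor hr hV hVr
  refine ⟨g, hg, hgr, (condExp_congr_ae hVg).trans
    (integral_kernel_ae_eq_condExp hM j n hg (B := ‖c‖ + r) fun x => ?_).symm⟩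
  exact (norm_le_norm_add_norm_sub' _ _).trans (add_le_add_right (hgr x) _)

theorem IsInhomMarkov.isDoeblinSystem [IsProbabilityMeasure μ] (hM : IsInhomMarkov μ X κ)
    (hγ : 0 < γ) (hm : ∀ j, IsProbabilityMeasure (m j))
    (hDoeblin : ∀ j x, ENNReal.ofReal γ • m (j + n₀) ≤ κ j n₀ x) :
    IsDoeblinSystem μ (strictPast hM.meas) (fun j => MeasurableSpace.comap (X j) inferInstance)
      n₀ γ where
  le := comap_le_pastSigma
  bot := strictPast_zero hM.meas
  pos := hγ
  le_one := by
    obtain ⟨ω⟩ := nonempty_of_isProbabilityMeasure μ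
    have := (hM.isMarkovKernel 0 n₀).isProbabilityMeasure (X 0 ω)
    exact le_one_of_ofReal_smul_le (hDoeblin 0 (X 0 ω))
  markov j V hV hVtop := by
    obtain ⟨B, hB⟩ := exists_ae_norm_le_of_memLp_top hVtop
    obtain ⟨g, hg, -, hVg⟩ := exists_condExp_eq_integral_kernel hM j 1 hV (c := 0) (abs_nonneg B)
      (hB.mono fun ω hω => by simpa using hω.trans (le_abs_self B))
    have := hM.isMarkovKernel j 1
    exact ⟨_, (hg.integral_kernel (κ := κ j 1)).comp_measurable (comap_measurable (X j)), hVg⟩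
  contraction j V c r hV _ hVr := by
    have ⟨_, hω⟩ := hVr.exists
    obtain ⟨g, hg, hgr, hVg⟩ :=
      exists_condExp_eq_integral_kernel hM j n₀ hV ((norm_nonneg _).trans hω) hVr
    refine ⟨minorizedCentre γ (m (j + n₀)) g c, norm_minorizedCentre_sub_le hγ.le hgr, ?_⟩
    have hpast : ∀ᵐ ω ∂μ, ‖μ[V | pastSigma X j] ω - minorizedCentre γ (m (j + n₀)) g c‖
        ≤ (1 - γ) * r := by
      filter_upwards [hVg] with ω hω
      have := (hM.isMarkovKernel j n₀).isProbabilityMeasure (X j ω)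
      rw [hω]
      exact norm_integral_sub_minorizedCentre_le hγ.le (hDoeblin j _) hg hgr
    filter_upwards [ae_norm_condExp_sub_const_le ((strictPast hM.meas).le j) integrable_condExp
      hpast, condExp_condExp_of_le (f := V) ((strictPast hM.meas).mono j.le_succ)
        ((strictPast hM.meas).le (j + 1))] with ω hle htower
    rwa [← htower]

end MarkovChain

section NormalApproximation

variable {P : Measure ℝ} {S a t B : ℝ}

lemma cdf_le_mul_exp [IsProbabilityMeasure P] (ha : 0 ≤ a)
    (hint : Integrable (fun x => Real.exp (-a * x)) P) (hB : mgf id P (-a) ≤ B) :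
    cdf P t ≤ B * Real.exp (a * t) := by
  have hchernoff : P.real (Set.Iic t) ≤ Real.exp (- -a * t) * mgf id P (-a) :=
    measure_le_le_exp_mul_mgf t (neg_nonpos.2 ha) hint
  rw [neg_neg] at hchernoff
  rw [cdf_eq_real, mul_comm]
  exact hchernoff.trans (by gcongr)

lemma one_sub_cdf_le_mul_exp [IsProbabilityMeasure P] (ha : 0 ≤ a)
    (hint : Integrable (fun x => Real.exp (a * x)) P) (hB : mgf id P a ≤ B) :
    1 - cdf P t ≤ B * Real.exp (-a * t) := by
  have hchernoff : P.real (Set.Ici t) ≤ Real.exp (-a * t) * mgf id P a :=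
    measure_ge_le_exp_mul_mgf t ha hint
  rw [cdf_eq_real, ← probReal_compl_eq_one_sub measurableSet_Iic, Set.compl_Iic, mul_comm]
  calc P.real (Set.Ioi t) ≤ P.real (Set.Ici t) := measureReal_mono Set.Ioi_subset_Ici_self
    _ ≤ Real.exp (-a * t) * B := hchernoff.trans (by gcongr)

lemma HasNearGaussianMGF.mgf_le (h : HasNearGaussianMGF P S) (ha : |a| < S) :
    mgf id P a ≤ Real.exp (2 * a ^ 2) := by
  have hS : 0 < S := (abs_nonneg a).trans_lt ha
  obtain ⟨r, hr, hr_le⟩ := h.exists_remainder a (by simpa using ha)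
  have hre : r.re ≤ a ^ 2 :=
    calc r.re ≤ ‖(a : ℂ)‖ ^ 3 / S := (Complex.re_le_norm r).trans hr_le
      _ = |a| / S * a ^ 2 := by rw [Complex.norm_real, Real.norm_eq_abs, ← sq_abs]; ring
      _ ≤ a ^ 2 := mul_le_of_le_one_left (sq_nonneg a) ((div_le_one hS).2 ha.le)
  have hmgf : mgf id P a = ‖complexMGF id P a‖ := by
    rw [complexMGF_ofReal, Complex.norm_real, Real.norm_of_nonneg mgf_nonneg]
  have hsq : ((a : ℂ) ^ 2 / 2).re = a ^ 2 / 2 := by norm_cast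
  rw [hmgf, hr, Complex.norm_exp, Complex.add_re, hsq]
  gcongr
  linarith [sq_nonneg a]

lemma HasNearGaussianMGF.abs_cdf_sub_le [IsProbabilityMeasure P] (h : HasNearGaussianMGF P S)
    (ha : 0 ≤ a) (haS : a < S) (t : ℝ) :
    |cdf P t - cdf (gaussianReal 0 1) t| ≤ Real.exp (2 * a ^ 2) * Real.exp (-a * |t|) := by
  have hG : HasNearGaussianMGF (gaussianReal 0 1) S :=
    hasNearGaussianMGF_gaussianReal (ha.trans haS.le)
  have hpos : |a| < S := by rwa [abs_of_nonneg ha]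
  have hneg : |-a| < S := by rwa [abs_neg]
  rcases le_total t 0 with ht | ht
  · have htail : ∀ Q : Measure ℝ, IsProbabilityMeasure Q → HasNearGaussianMGF Q S →
        cdf Q t ≤ Real.exp (2 * a ^ 2) * Real.exp (-a * |t|) := fun Q _ hQ => by
      rw [abs_of_nonpos ht, neg_mul_neg]
      exact cdf_le_mul_exp ha (hQ.integrable_exp_mul _) (by simpa using hQ.mgf_le hneg)
    exact abs_sub_le_of_nonneg_of_le (cdf_nonneg _ _) (htail P inferInstance h)
      (cdf_nonneg _ _) (htail _ inferInstance hG)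
  · have htail : ∀ Q : Measure ℝ, IsProbabilityMeasure Q → HasNearGaussianMGF Q S →
        1 - cdf Q t ≤ Real.exp (2 * a ^ 2) * Real.exp (-a * |t|) := fun Q _ hQ => by
      rw [abs_of_nonneg ht]
      exact one_sub_cdf_le_mul_exp ha (hQ.integrable_exp_mul _) (hQ.mgf_le hpos)
    rw [abs_sub_comm, ← sub_sub_sub_cancel_left _ _ 1]
    exact abs_sub_le_of_nonneg_of_le (sub_nonneg.2 (cdf_le_one _ _)) (htail P inferInstance h)
      (sub_nonneg.2 (cdf_le_one _ _)) (htail _ inferInstance hG)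

theorem exists_abs_cdf_sub_le_mul_exp {S₀ : ℝ} (hS₀ : 0 < S₀) :
    ∃ K > 0, ∃ a > 0, ∀ {P : Measure ℝ} {S : ℝ} [IsProbabilityMeasure P],
      HasNearGaussianMGF P S → S₀ ≤ S →
        ∀ t, |cdf P t - cdf (gaussianReal 0 1) t| ≤ K / S * Real.exp (-a * |t|) := by
  obtain ⟨K, hK, hlarge⟩ := exists_abs_cdf_sub_le
  have ha : 0 < min 1 (S₀ / 2) := by positivity
  refine ⟨max K (16 * Real.exp 2), by positivity, min 1 (S₀ / 2), ha, fun {P S} _ h hS t => ?_⟩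
  have hSpos : 0 < S := hS₀.trans_le hS
  rcases le_or_gt 16 S with hS16 | hS16
  · refine (hlarge h hS16 t).trans ?_
    gcongr
    · exact le_max_left _ _
    · rw [neg_mul]
      exact neg_le_neg (mul_le_of_le_one_left (abs_nonneg t) (min_le_left _ _))
  · refine (h.abs_cdf_sub_le ha.le (by linarith [min_le_right 1 (S₀ / 2)]) t).trans ?_
    gcongr
    calc Real.exp (2 * min 1 (S₀ / 2) ^ 2) ≤ Real.exp 2 := by
          gcongr
          exact mul_le_of_le_one_right zero_le_two (pow_le_one₀ ha.le (min_le_left _ _))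
      _ ≤ 16 * Real.exp 2 / S := by
          rw [le_div_iff₀ hSpos, mul_comm]
          gcongr
      _ ≤ max K (16 * Real.exp 2) / S := by
          gcongr
          exact le_max_right _ _

lemma integrable_exp_neg_mul_abs (ha : 0 < a) : Integrable fun t : ℝ => Real.exp (-a * |t|) := by
  have hpos : IntegrableOn (fun t : ℝ => Real.exp (-a * |t|)) (Set.Ioi 0) :=
    (exp_neg_integrableOn_Ioi 0 ha).congr_fun
      (fun t ht => by simp only [abs_of_pos (Set.mem_Ioi.1 ht)]) measurableSet_Ioi
  have hneg : IntegrableOn (fun t : ℝ => Real.exp (-a * |t|)) (Set.Iic 0) :=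
    (integrableOn_exp_mul_Iic ha 0).congr_fun
      (fun t ht => by simp only [abs_of_nonpos (Set.mem_Iic.1 ht), neg_mul_neg]) measurableSet_Iic
  rw [← integrableOn_univ, ← Set.Iic_union_Ioi (a := (0 : ℝ))]
  exact hneg.union hpos

lemma memLp_exp_neg_mul_abs (ha : 0 < a) {q : ℝ} (hq : 0 < q) :
    MemLp (fun t : ℝ => Real.exp (-a * |t|)) (ENNReal.ofReal q) := by
  rw [← integrable_norm_rpow_iff (by fun_prop) (by simpa using hq) ENNReal.ofReal_ne_top,
    ENNReal.toReal_ofReal hq.le]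
  refine (integrable_exp_neg_mul_abs (mul_pos ha hq)).congr (Eventually.of_forall fun t => ?_)
  simp only [Real.norm_eq_abs, Real.abs_exp, ← Real.exp_mul]
  ring_nf

theorem exists_eLpNorm_cdf_sub_le {q S₀ : ℝ} (hq : 0 < q) (hS₀ : 0 < S₀) :
    ∃ K > 0, ∀ {P : Measure ℝ} {S : ℝ} [IsProbabilityMeasure P],
      HasNearGaussianMGF P S → S₀ ≤ S →
        eLpNorm (fun t => cdf P t - cdf (gaussianReal 0 1) t) (ENNReal.ofReal q) volume
          ≤ ENNReal.ofReal (K / S) := by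
  obtain ⟨K, hK, a, ha, hcdf⟩ := exists_abs_cdf_sub_le_mul_exp hS₀
  set E := eLpNorm (fun t : ℝ => Real.exp (-a * |t|)) (ENNReal.ofReal q) volume with hE
  have hE_top : E ≠ ∞ := (memLp_exp_neg_mul_abs ha hq).eLpNorm_ne_top
  refine ⟨K * (E.toReal + 1), by positivity, fun {P S} _ h hS => ?_⟩
  have hKS : 0 ≤ K / S := div_nonneg hK.le (hS₀.le.trans hS)
  calc eLpNorm (fun t => cdf P t - cdf (gaussianReal 0 1) t) (ENNReal.ofReal q) volume
      ≤ eLpNorm ((K / S) • fun t : ℝ => Real.exp (-a * |t|)) (ENNReal.ofReal q) volume :=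
        eLpNorm_mono_real fun t => hcdf h hS t
    _ = ENNReal.ofReal (K / S * E.toReal) := by
        rw [eLpNorm_const_smul, ← hE, Real.enorm_of_nonneg hKS, ENNReal.ofReal_mul hKS,
          ENNReal.ofReal_toReal hE_top]
    _ ≤ ENNReal.ofReal (K * (E.toReal + 1) / S) := by
        rw [mul_div_right_comm]
        gcongr
        exact le_add_of_nonneg_right zero_le_one

lemma IsQuadraticLogMGF.hasNearGaussianMGF {O : Type*} {m0 : MeasurableSpace O} {μ : Measure O}
    [IsProbabilityMeasure μ] {V : O → ℝ} {δ σ : ℝ} {Λ : ℂ → ℂ} (h : IsQuadraticLogMGF μ V δ Λ)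
    (hV : MemLp V ∞ μ) (h0 : ∫ ω, V ω ∂μ = 0) (hσ : 0 < σ) (hvar : ∫ ω, V ω ^ 2 ∂μ = σ ^ 2) :
    HasNearGaussianMGF (μ.map fun ω => V ω / σ) (δ * σ / 10) where
  integrable_exp_mul a := by
    obtain ⟨B, hB⟩ := exists_ae_norm_le_of_memLp_top hV
    refine (integrable_map_measure (by fun_prop) (hV.1.aemeasurable.div_const σ)).2
      (integrable_exp_mul_of_mem_Icc (a := -(B / σ)) (b := B / σ)
        (hV.1.aemeasurable.div_const σ) ?_)
    filter_upwards [hB] with ω hω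
    rw [Set.mem_Icc, ← abs_le, abs_div, abs_of_pos hσ]
    gcongr
    exact hω
  exists_remainder z hz := by
    have hσc : (σ : ℂ) ≠ 0 := by exact_mod_cast hσ.ne'
    have hnorm : ‖z / σ‖ = ‖z‖ / σ := by
      rw [norm_div, Complex.norm_real, Real.norm_of_nonneg hσ.le]
    have hball : z / σ ∈ Metric.ball (0 : ℂ) δ := by
      rw [mem_ball_zero_iff, hnorm, div_lt_iff₀ hσ]
      linarith [norm_nonneg z]
    refine ⟨Λ (z / σ) - z ^ 2 / 2, ?_, ?_⟩
    · rw [add_sub_cancel, h.exp_eq _ hball, complexMGF_id_map (hV.1.aemeasurable.div_const σ)]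
      simp only [complexMGF, Complex.ofReal_div]
      simp_rw [mul_div_assoc', div_mul_eq_mul_div]
    · have hcubic := h.norm_sub_gaussian_le hV h0 hball
      have hsq : ((σ ^ 2 : ℝ) : ℂ) * (z / σ) ^ 2 / 2 = z ^ 2 / 2 := by
        push_cast
        field_simp
      rw [hvar, hnorm, hsq] at hcubic
      refine hcubic.trans_eq ?_
      field_simp

end NormalApproximation

section DoeblinBerryEsseen

variable {O : Type*} {m0 : MeasurableSpace O} {μ : Measure O}
  {ℱ : Filtration ℕ m0} {𝒮 : ℕ → MeasurableSpace O} {n₀ : ℕ} {γ C δ : ℝ} {Y : ℕ → O → ℝ}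

/-- The random variable `Z`, centred and scaled to unit variance (and `0` if `Z` has variance
`0`). -/
def standardized (μ : Measure O) (Z : O → ℝ) (ω : O) : ℝ :=
  (Z ω - ∫ ω', Z ω' ∂μ) / √(variance Z μ)

lemma cdf_map_standardized [IsProbabilityMeasure μ] {Z : O → ℝ} (hZ : AEMeasurable Z μ)
    (hvar : 0 < √(variance Z μ)) (t : ℝ) :
    cdf (μ.map (standardized μ Z)) t =
      μ.real {ω | Z ω - ∫ ω', Z ω' ∂μ ≤ t * √(variance Z μ)} := by
  have hW : AEMeasurable (standardized μ Z) μ := (hZ.sub_const _).div_const _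
  have := Measure.isProbabilityMeasure_map hW
  rw [cdf_eq_real, map_measureReal_apply_of_aemeasurable hW measurableSet_Iic]
  congr 1
  ext ω
  exact div_le_iff₀ hvar

lemma IsDoeblinProcess.exists_isQuadraticLogMGF [IsProbabilityMeasure μ]
    (S : IsDoeblinProcess μ ℱ 𝒮 n₀ γ C fun j ω => (Y j ω : ℂ)) (hI : ∀ j, ∫ ω, Y j ω ∂μ = 0)
    (n : ℕ) (hδ : δ * mixingRadius C γ n₀ ≤ 1 / 432) :
    ∃ Λ, IsQuadraticLogMGF μ (fun ω => ∑ j ∈ Finset.range n, Y j ω) δ Λ := by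
  obtain ⟨Λ, hd, hΛ⟩ := S.exists_log_mgf
    (fun j => by rw [integral_complex_ofReal, hI j, Complex.ofReal_zero]) n hδ
  have hsum : ∀ ω, blockSum (fun j ω => (Y j ω : ℂ)) 0 n ω
      = ((∑ j ∈ Finset.range n, Y j ω : ℝ) : ℂ) := fun ω => by simp [blockSum]
  simp only [hsum, Complex.norm_real, Real.norm_eq_abs, sq_abs] at hΛ
  exact ⟨Λ, hd, fun z hz => (hΛ z hz).1, fun z hz => (hΛ z hz).2⟩

namespace IsDoeblinSystem

variable (S : IsDoeblinSystem μ ℱ 𝒮 n₀ γ) (hY : ∀ j, AEStronglyMeasurable[𝒮 j] (Y j) μ)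
  (hC : ∀ j, ∀ᵐ ω ∂μ, |Y j ω| ≤ C)

include S hY hC

lemma memLp_top (j : ℕ) : MemLp (Y j) ∞ μ :=
  memLp_top_of_bound ((hY j).mono ((S.le j).trans (ℱ.le _))) C (hC j)

variable [IsProbabilityMeasure μ]

lemma isDoeblinProcess_centred : IsDoeblinProcess μ ℱ 𝒮 n₀ γ (2 * C)
    fun j ω => ((Y j ω - ∫ ω', Y j ω' ∂μ : ℝ) : ℂ) where
  toIsDoeblinSystem := S
  meas j := Complex.continuous_ofReal.comp_aestronglyMeasurable
    ((hY j).sub aestronglyMeasurable_const)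
  norm_le j := by
    have hmean : |∫ ω, Y j ω ∂μ| ≤ C := by
      simpa using norm_integral_le_of_norm_le_const (μ := μ) (f := Y j) (hC j)
    filter_upwards [hC j] with ω hω
    rw [Complex.norm_real, Real.norm_eq_abs, two_mul]
    exact (abs_sub _ _).trans (add_le_add hω hmean)

lemma hasNearGaussianMGF_standardized (hδ : δ * mixingRadius (2 * C) γ n₀ ≤ 1 / 432) (n : ℕ)
    (hvar : 0 < √(variance (fun ω => ∑ j ∈ Finset.range n, Y j ω) μ)) :
    HasNearGaussianMGF (μ.map (standardized μ fun ω => ∑ j ∈ Finset.range n, Y j ω))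
      (δ * √(variance (fun ω => ∑ j ∈ Finset.range n, Y j ω) μ) / 10) := by
  have hYint : ∀ j, Integrable (Y j) μ := fun j => (S.memLp_top hY hC j).integrable le_top
  have hsum : MemLp (fun ω => ∑ j ∈ Finset.range n, Y j ω) ∞ μ :=
    memLp_finsetSum _ fun j _ => S.memLp_top hY hC j
  obtain ⟨Λ, hΛ⟩ := (S.isDoeblinProcess_centred hY hC).exists_isQuadraticLogMGF
    (fun j => by simp [integral_sub (hYint j) (integrable_const _)]) n hδ
  have hcentred : (fun ω => ∑ j ∈ Finset.range n, (Y j ω - ∫ ω', Y j ω' ∂μ)) =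
      fun ω => ∑ j ∈ Finset.range n, Y j ω - ∫ ω', ∑ j ∈ Finset.range n, Y j ω' ∂μ := by
    funext ω
    rw [integral_finsetSum _ fun j _ => hYint j, Finset.sum_sub_distrib]
  rw [hcentred] at hΛ
  refine hΛ.hasNearGaussianMGF (hsum.sub (memLp_const _)) ?_ hvar ?_
  · simp [integral_sub (hsum.integrable le_top) (integrable_const _)]
  · rw [Real.sq_sqrt (variance_nonneg _ _), variance_eq_integral hsum.1.aemeasurable]

theorem exists_eLpNorm_cdf_standardized_sub_le {q c : ℝ} (hq : 0 < q) (hc : 0 < c) :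
    ∃ K > 0, ∀ n, c ≤ √(variance (fun ω => ∑ j ∈ Finset.range n, Y j ω) μ) →
      eLpNorm (fun t => cdf (μ.map (standardized μ fun ω => ∑ j ∈ Finset.range n, Y j ω)) t -
          cdf (gaussianReal 0 1) t) (ENNReal.ofReal q) volume
        ≤ ENNReal.ofReal (K / √(variance (fun ω => ∑ j ∈ Finset.range n, Y j ω) μ)) := by
  set R := mixingRadius (2 * C) γ n₀
  have hR0 : 0 ≤ R := (S.isDoeblinProcess_centred hY hC).mixingRadius_nonneg
  set δ := 1 / (432 * (R + 1)) with hδ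
  have hδR : δ * R ≤ 1 / 432 := by
    rw [hδ, div_mul_eq_mul_div, one_mul, div_le_div_iff₀ (by positivity) (by norm_num)]
    linarith
  obtain ⟨K, hK, hbound⟩ := exists_eLpNorm_cdf_sub_le hq (show 0 < δ * c / 10 by positivity)
  refine ⟨10 * K / δ, by positivity, fun n hn => ?_⟩
  have hsum : MemLp (fun ω => ∑ j ∈ Finset.range n, Y j ω) ∞ μ :=
    memLp_finsetSum _ fun j _ => S.memLp_top hY hC j
  have : IsProbabilityMeasure (μ.map (standardized μ fun ω => ∑ j ∈ Finset.range n, Y j ω)) :=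
    Measure.isProbabilityMeasure_map ((hsum.1.aemeasurable.sub_const _).div_const _)
  refine (hbound (S.hasNearGaussianMGF_standardized hY hC hδR n (hc.trans_le hn))
    (by gcongr)).trans_eq ?_
  congr 1
  field_simp

end IsDoeblinSystem

end DoeblinBerryEsseen

lemma exists_pos_forall_pos_le_of_tendsto_atTop {s : ℕ → ℝ} (hs : Tendsto s atTop atTop) :
    ∃ c > 0, ∀ n, 0 < s n → c ≤ s n := by
  obtain ⟨N, hN⟩ := eventually_atTop.1 (hs.eventually_ge_atTop 1)
  have hfirst : ∀ᶠ c in nhdsWithin (0 : ℝ) (Set.Ioi 0),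
      ∀ n ∈ Finset.range N, 0 < s n → c ≤ s n :=
    (eventually_all_finset _).2 fun n _ => eventually_imp_distrib_left.2 fun hn =>
      mem_of_superset (Ioo_mem_nhdsGT hn) fun c hc => hc.2.le
  obtain ⟨c, ⟨hc0, hc1⟩, hc⟩ := (Filter.Eventually.and (Ioo_mem_nhdsGT one_pos) hfirst).exists
  refine ⟨c, hc0, fun n hn => ?_⟩
  rcases lt_or_ge n N with hnN | hnN
  · exact hc n (Finset.mem_range.2 hnN) hn
  · exact hc1.le.trans (hN n hnN)

theorem Lq_berry_esseen_doeblin_general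
    (μ : Measure Ω) [IsProbabilityMeasure μ]
    (X : ∀ j, Ω → 𝒳 j) (κ : ∀ j n, Kernel (𝒳 j) (𝒳 (j + n)))
    (hMarkov : IsInhomMarkov μ X κ)
    (n₀ : ℕ) (γ : ℝ) (hγ : 0 < γ)
    (m : ∀ j, Measure (𝒳 j)) (hm : ∀ j, IsProbabilityMeasure (m j))
    (hDoeblin : ∀ j (x : 𝒳 j) (Γ : Set (𝒳 (j + n₀))), MeasurableSet Γ →
      ENNReal.ofReal γ * m (j + n₀) Γ ≤ κ j n₀ x Γ)
    (f : ∀ j, 𝒳 j → ℝ) (hfmeas : ∀ j, Measurable (f j))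
    (C : ℝ) (hbdd : ∀ j, ∀ᵐ ω ∂μ, |f j (X j ω)| ≤ C)
    (S : ℕ → Ω → ℝ) (hS : ∀ n ω, S n ω = ∑ j ∈ Finset.range n, f j (X j ω))
    (σs : ℕ → ℝ) (hσ : ∀ n, σs n = Real.sqrt (variance (S n) μ))
    (F : ℕ → ℝ → ℝ)
    (hF : ∀ n t, F n t = (μ {ω | S n ω - ∫ ω', S n ω' ∂μ ≤ t * σs n}).toReal) :
    ∀ q c : ℝ, 0 < q → 0 < c → ∃ Cq : ℝ, 0 < Cq ∧ ∀ n : ℕ, c ≤ σs n →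
      eLpNorm (fun t => F n t - stdNormalCDF t) (ENNReal.ofReal q) volume
        ≤ ENNReal.ofReal Cq / ENNReal.ofReal (σs n) := by
  intro q c hq hc
  have hDS := hMarkov.isDoeblinSystem hγ hm fun j x => Measure.le_iff.2 fun Γ => hDoeblin j x Γ
  have hY : ∀ j, StronglyMeasurable[MeasurableSpace.comap (X j) inferInstance]
      fun ω => f j (X j ω) := fun j =>
    (hfmeas j).stronglyMeasurable.comp_measurable (comap_measurable (X j))
  obtain ⟨K, hK, hbound⟩ := hDS.exists_eLpNorm_cdf_standardized_sub_le
    (fun j => (hY j).aestronglyMeasurable) hbdd hq hc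
  refine ⟨K, hK, fun n hn => ?_⟩
  have hpos : 0 < σs n := hc.trans_le hn
  have hSn : (fun ω => ∑ j ∈ Finset.range n, f j (X j ω)) = S n := (funext (hS n)).symm
  have hSmeas : Measurable (S n) := hSn ▸ Finset.measurable_fun_sum _ fun j _ =>
    (hfmeas j).comp (hMarkov.meas j)
  have hcdf : (fun t => F n t - stdNormalCDF t)
      = fun t => cdf (μ.map (standardized μ (S n))) t - cdf (gaussianReal 0 1) t := by
    funext t
    rw [hF, cdf_map_standardized hSmeas.aemeasurable (hσ n ▸ hpos), ← hσ, cdf_eq_real]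
    rfl
  have := hbound n
  rw [hSn, ← hσ, ← hcdf] at this
  rw [← ENNReal.ofReal_div_of_pos hpos]
  exact this hn

/-- **Theorem (Lᵠ Berry–Esseen bound, Doeblin case).**
If `σ_n → ∞`, then for every `q > 0` one has `‖F_n − Φ‖_{L^q(dt)} = O(σ_n⁻¹)`:
there is a constant `C_q > 0` with `‖F_n − Φ‖_{L^q(dt)} ≤ C_q σ_n⁻¹` for all `n`. -/
theorem Lq_berry_esseen_doeblin
    (μ : Measure Ω) [IsProbabilityMeasure μ]
    (X : ∀ j, Ω → 𝒳 j) (κ : ∀ j n, Kernel (𝒳 j) (𝒳 (j + n)))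
    (hMarkov : IsInhomMarkov μ X κ)
    (n₀ : ℕ) (hn₀ : 0 < n₀) (γ : ℝ) (hγ : γ ∈ Set.Ioo (0 : ℝ) 1)
    (m : ∀ j, Measure (𝒳 j)) (hm : ∀ j, IsProbabilityMeasure (m j))
    (hDoeblin : ∀ j (x : 𝒳 j) (Γ : Set (𝒳 (j + n₀))), MeasurableSet Γ →
      ENNReal.ofReal γ * m (j + n₀) Γ ≤ κ j n₀ x Γ)
    (f : ∀ j, 𝒳 j → ℝ) (hfmeas : ∀ j, Measurable (f j))
    (C : ℝ) (hbdd : ∀ j, ∀ᵐ ω ∂μ, |f j (X j ω)| ≤ C)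
    (S : ℕ → Ω → ℝ) (hS : ∀ n ω, S n ω = ∑ j ∈ Finset.range n, f j (X j ω))
    (σs : ℕ → ℝ) (hσ : ∀ n, σs n = Real.sqrt (variance (S n) μ))
    (hσ_top : Tendsto σs atTop atTop)
    (F : ℕ → ℝ → ℝ)
    (hF : ∀ n t, F n t = (μ {ω | S n ω - ∫ ω', S n ω' ∂μ ≤ t * σs n}).toReal) :
    ∀ q : ℝ, 0 < q → ∃ Cq : ℝ, 0 < Cq ∧ ∀ n : ℕ,
      eLpNorm (fun t => F n t - stdNormalCDF t) (ENNReal.ofReal q) volume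
        ≤ ENNReal.ofReal Cq / ENNReal.ofReal (σs n) := by
  intro q hq
  obtain ⟨c, hc, hcσ⟩ := exists_pos_forall_pos_le_of_tendsto_atTop hσ_top
  obtain ⟨Cq, hCq, hbound⟩ := Lq_berry_esseen_doeblin_general μ X κ hMarkov n₀ γ hγ.1 m hm hDoeblin
    f hfmeas C hbdd S hS σs hσ F hF q c hq hc
  refine ⟨Cq, hCq, fun n => ?_⟩
  rcases le_or_gt (σs n) 0 with hn | hn
  · rw [ENNReal.ofReal_of_nonpos hn, ENNReal.div_zero (ENNReal.ofReal_pos.2 hCq).ne']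
    exact le_top
  · exact hbound n (hcσ n hn)

end
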